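/- arXiv:0712.1896 — 3 statements merged into one kernel-verified Lean document; each statement's English description precedes it below -/
import Mathlib

section
/- Under Assumptions A and B, for every n ≥ 1 the contraction semigroup {T_t^{(n)}}_{t≥0} on h^{⊗n} is uniformly continuous, i.e. lim_{t→0} ‖T_t^{(n)} − 1_{h^{⊗n}}‖ = 0. -/
/-!
STATEMENT 8: Under Assumptions A (A1, A2a, A2b, A3) and B (uniform continuity:
`lim_{t→0} sup{|⟨Ω,(U_t−1)(u,v)Ω⟩| : ‖u‖=‖v‖=1} = 0`), for every `n ≥ 1` the contraction
semigroup `{T_t^{(n)}}` on `h^{⊗n}` is uniformly continuous, i.e.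
`lim_{t→0⁺} ‖T_t^{(n)} − 1‖ = 0`.

Modelling as in the companion files: `E` models `h ⊗ H` (map `tmul`), `opAtE` gives the
operators `T(u,v)` on `H`, `K` models `h^{⊗n}` (map `tmuln`), Ω is a unit vector, and the
matrix elements of `T_t^{(n)}` on product vectors are given by vacuum expectations of
ordered products of the `opAtE (U 0 t) uᵢ vᵢ`.  Assumption B is expressed in ε-δ form;
`(U_t − 1)(u,v)` is `opAtE (U 0 t - 1) u v`.
-/

open scoped ComplexInnerProductSpace
open ContinuousLinearMap

/-!
If `U` is a contraction then `‖(U - 1) x‖² ≤ 2 |⟪x, (U - 1) x⟫|`, so Assumption B with `u = v`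
gives `‖(U_t - 1) (u ⊗ Ω)‖ ≤ √(2δ) ‖u‖` for small `t`. The telescoping sum
`U^{(n)} - 1 = ∑ k, U^{(n,1)} ⋯ U^{(n,k-1)} (U^{(n,k)} - 1)`, applied to `φ ⊗ Ω` with
`φ ∈ h^{⊗n}`, then yields `‖U_t^{(n)} (φ ⊗ Ω) - φ ⊗ Ω‖ ≤ n √(2δ) ‖φ‖`, whence
`‖T_t^{(n)} - 1‖ ≤ n √(2δ)`. A matrix element of `T_t^{(n)}` between algebraic tensors involves only
finitely many orthonormal vectors of `h`; compressing `U_t` to their span turns it into a finite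
block matrix of operators on `H`, and `U_t^{(n)}` into an ordered power of that matrix.
-/

section

open scoped InnerProductSpace Kronecker

section InnerProduct

variable {𝕜 E F G : Type*} [RCLike 𝕜]
  [NormedAddCommGroup E] [InnerProductSpace 𝕜 E]
  [NormedAddCommGroup F] [InnerProductSpace 𝕜 F]
  [NormedAddCommGroup G] [InnerProductSpace 𝕜 G]

lemma norm_le_of_forall_inner_eq_inner_map (W : F →ₗᵢ[𝕜] G) {y : F} {z : G}
    (h : ∀ x, ⟪x, y⟫_𝕜 = ⟪W x, z⟫_𝕜) : ‖y‖ ≤ ‖z‖ := by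
  have hsq : ‖y‖ * ‖y‖ ≤ ‖y‖ * ‖z‖ := calc
    ‖y‖ * ‖y‖ = ‖⟪W y, z⟫_𝕜‖ := by rw [← h, inner_self_eq_norm_sq_to_K, sq]; simp
    _ ≤ ‖W y‖ * ‖z‖ := norm_inner_le_norm _ _
    _ = ‖y‖ * ‖z‖ := by rw [W.norm_map]
  rcases (norm_nonneg y).eq_or_lt with hy | hy
  · exact hy ▸ norm_nonneg z
  · exact le_of_mul_le_mul_left hsq hy

lemma norm_sub_sq_le_two_mul_norm_inner_sub {x y : E} (h : ‖y‖ ≤ ‖x‖) :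
    ‖y - x‖ ^ 2 ≤ 2 * ‖⟪x, y - x⟫_𝕜‖ := by
  have hre : RCLike.re ⟪x, y - x⟫_𝕜 = RCLike.re ⟪y, x⟫_𝕜 - ‖x‖ ^ 2 := by
    rw [inner_sub_right, map_sub, inner_re_symm, inner_self_eq_norm_sq]
  have hneg : -RCLike.re ⟪x, y - x⟫_𝕜 ≤ ‖⟪x, y - x⟫_𝕜‖ :=
    (neg_le_abs _).trans (RCLike.abs_re_le_norm _)
  have hsq : ‖y‖ ^ 2 ≤ ‖x‖ ^ 2 := by gcongr
  linarith [norm_sub_sq (𝕜 := 𝕜) y x]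

lemma opNorm_le_of_dense_of_norm_inner_le {A : E →L[𝕜] F} {S : Set E} {R : Set F} (hS : Dense S)
    (hR : Dense R) {C : ℝ} (hC : 0 ≤ C)
    (h : ∀ φ ∈ R, ∀ ψ ∈ S, ‖⟪φ, A ψ⟫_𝕜‖ ≤ C * ‖φ‖ * ‖ψ‖) : ‖A‖ ≤ C := by
  have hall : ∀ (φ : F) (ψ : E), ‖⟪φ, A ψ⟫_𝕜‖ ≤ C * ‖φ‖ * ‖ψ‖ := by
    intro φ ψ
    refine hR.induction (fun φ hφ ↦ hS.induction (h φ hφ) ?_ ψ) ?_ φ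
    all_goals exact isClosed_le (by fun_prop) (by fun_prop)
  refine ContinuousLinearMap.opNorm_le_of_re_inner_le (𝕜 := 𝕜) hC fun ψ φ hψ hφ ↦ ?_
  calc RCLike.re ⟪A ψ, φ⟫_𝕜 ≤ ‖⟪φ, A ψ⟫_𝕜‖ := by
        rw [norm_inner_symm]; exact RCLike.re_le_norm _
    _ ≤ C := by simpa [hφ, hψ] using hall φ ψ

lemma eq_of_mem_span_of_forall_inner_eq {S : Set E} {x y : E} (hx : x ∈ Submodule.span 𝕜 S)
    (hy : y ∈ Submodule.span 𝕜 S) (h : ∀ s ∈ S, ⟪s, x⟫_𝕜 = ⟪s, y⟫_𝕜) : x = y := by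
  have hle : Submodule.span 𝕜 S ≤ (𝕜 ∙ (x - y))ᗮ := Submodule.span_le.2 fun s hs ↦
    Submodule.mem_orthogonal_singleton_iff_inner_left.2 (by rw [inner_sub_right, h s hs, sub_self])
  exact sub_eq_zero.1 <| inner_self_eq_zero.1 <|
    Submodule.mem_orthogonal_singleton_iff_inner_left.1 (hle (sub_mem hx hy))

end InnerProduct

section PiLp

lemma piLp_norm_le_of_forall_norm_slice_le {ι κ σ F G : Type*} [Fintype ι] [Finite κ] [Fintype σ]
    [SeminormedAddCommGroup F] [SeminormedAddCommGroup G] (e : κ × ι ≃ σ)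
    (x : PiLp 2 fun _ : σ ↦ F) (y : PiLp 2 fun _ : σ ↦ G) {C : ℝ} (hC : 0 ≤ C)
    (h : ∀ k, ‖WithLp.toLp 2 fun i ↦ x (e (k, i))‖ ≤ C * ‖WithLp.toLp 2 fun i ↦ y (e (k, i))‖) :
    ‖x‖ ≤ C * ‖y‖ := by
  cases nonempty_fintype κ
  rw [← sq_le_sq₀ (by positivity) (by positivity)]
  have hsum := Finset.sum_le_sum fun k (_ : k ∈ Finset.univ) ↦
    pow_le_pow_left₀ (norm_nonneg _) (h k) 2
  simp only [mul_pow, PiLp.norm_sq_eq_of_L2, ← Finset.mul_sum, ← Fintype.sum_prod_type'] at hsum ⊢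
  rwa [e.sum_comp fun s ↦ ‖x s‖ ^ 2, e.sum_comp fun s ↦ ‖y s‖ ^ 2] at hsum

variable {𝕜 ι E : Type*} {G : ι → Type*} [Fintype ι] [RCLike 𝕜]
  [NormedAddCommGroup E] [InnerProductSpace 𝕜 E]
  [∀ i, NormedAddCommGroup (G i)] [∀ i, InnerProductSpace 𝕜 (G i)] {V : ∀ i, G i →ₗᵢ[𝕜] E}

/-- The isometry `x ↦ ∑ i, V i (x i)` from the Hilbert sum of finitely many spaces `G i` onto the
span of their mutually orthogonal copies in `E`. It is the finite case of
`OrthogonalFamily.linearIsometry`, with no completeness assumption on `E`. -/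
def sumIsometry (hV : OrthogonalFamily 𝕜 G V) : PiLp 2 G →ₗᵢ[𝕜] E where
  toFun x := ∑ i, V i (x i)
  map_add' x y := by simp [Finset.sum_add_distrib]
  map_smul' c x := by simp [Finset.smul_sum]
  norm_map' x := by
    rw [← sq_eq_sq₀ (norm_nonneg _) (norm_nonneg _), PiLp.norm_sq_eq_of_L2]
    exact hV.norm_sum x Finset.univ

lemma sumIsometry_apply (hV : OrthogonalFamily 𝕜 G V) (x : PiLp 2 G) :
    sumIsometry hV x = ∑ i, V i (x i) := rfl

end PiLp

section BlockMap

variable {𝕜 ι κ E H : Type*} [RCLike 𝕜] [NormedAddCommGroup H] [InnerProductSpace 𝕜 H]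
  [NormedAddCommGroup E] [InnerProductSpace 𝕜 E]

/-- The vector `a ⊗ Ω` of `𝕜^ι ⊗ H`. -/
def tensorVacuum (Ω : H) (a : EuclideanSpace 𝕜 ι) : PiLp 2 fun _ : ι ↦ H :=
  WithLp.toLp 2 fun i ↦ a i • Ω

lemma tensorVacuum_apply (Ω : H) (a : EuclideanSpace 𝕜 ι) (i : ι) :
    tensorVacuum Ω a i = a i • Ω := rfl

variable [Fintype ι]

/-- The action of a matrix of operators on `H` on the Hilbert sum of copies of `H`, identified
with `𝕜^ι ⊗ H`. -/
def blockMap (B : Matrix ι ι (H →L[𝕜] H)) :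
    (PiLp 2 fun _ : ι ↦ H) →ₗ[𝕜] PiLp 2 fun _ : ι ↦ H where
  toFun x := WithLp.toLp 2 fun i ↦ ∑ j, B i j (x j)
  map_add' x y := by ext i; simp [Finset.sum_add_distrib]
  map_smul' c x := by ext i; simp [Finset.smul_sum]

lemma blockMap_apply (B : Matrix ι ι (H →L[𝕜] H)) (x : PiLp 2 fun _ : ι ↦ H) (i : ι) :
    blockMap B x i = ∑ j, B i j (x j) := rfl

lemma norm_tensorVacuum {Ω : H} (hΩ : ‖Ω‖ = 1) (a : EuclideanSpace 𝕜 ι) :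
    ‖tensorVacuum Ω a‖ = ‖a‖ := by
  simp [PiLp.norm_eq_of_L2, tensorVacuum_apply, norm_smul, hΩ]

lemma inner_tensorVacuum_self {Ω : H} (hΩ : ‖Ω‖ = 1) (a b : EuclideanSpace 𝕜 ι) :
    ⟪tensorVacuum Ω a, tensorVacuum Ω b⟫_𝕜 = ⟪a, b⟫_𝕜 := by
  simp [PiLp.inner_apply, tensorVacuum_apply, inner_smul_left, inner_smul_right,
    inner_self_eq_norm_sq_to_K, hΩ, mul_comm]

/-- The operator given by the block matrix `B` moves `a ⊗ Ω` by at most `η * ‖a‖`. -/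
def VacuumDefectLE (Ω : H) (B : Matrix ι ι (H →L[𝕜] H)) (η : ℝ) : Prop :=
  ∀ a : EuclideanSpace 𝕜 ι, ‖blockMap B (tensorVacuum Ω a) - tensorVacuum Ω a‖ ≤ η * ‖a‖

namespace VacuumDefectLE

variable [Fintype κ] {Ω : H} {A : Matrix ι ι (H →L[𝕜] H)} {C : Matrix κ κ (H →L[𝕜] H)} {α γ : ℝ}

lemma reindex (hA : VacuumDefectLE Ω A α) (e : ι ≃ κ) : VacuumDefectLE Ω (A.reindex e e) α := by
  intro a
  set R := LinearIsometryEquiv.piLpCongrLeft 2 𝕜 H e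
  set b := LinearIsometryEquiv.piLpCongrLeft 2 𝕜 𝕜 e.symm a
  have hdefect : blockMap (A.reindex e e) (tensorVacuum Ω a) - tensorVacuum Ω a =
      R (blockMap A (tensorVacuum Ω b) - tensorVacuum Ω b) := by
    ext k
    simpa [R, b, blockMap_apply, tensorVacuum_apply, LinearIsometryEquiv.piLpCongrLeft_apply,
      Equiv.piCongrLeft'] using e.symm.sum_comp fun i ↦ a (e i) • A (e.symm k) i Ω
  have hnorm : ‖b‖ = ‖a‖ := LinearIsometryEquiv.norm_map _ a
  rw [hdefect, R.norm_map, ← hnorm]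
  exact hA b

lemma kronecker (hA₁ : ∀ x, ‖blockMap A x‖ ≤ ‖x‖) (hα : 0 ≤ α) (hγ : 0 ≤ γ)
    (hA : VacuumDefectLE Ω A α) (hC : VacuumDefectLE Ω C γ) :
    VacuumDefectLE Ω (A ⊗ₖ C) (α + γ) := by
  intro a
  let w : PiLp 2 fun _ : ι × κ ↦ H := WithLp.toLp 2 fun p ↦
    ∑ l, C p.2 l (a (p.1, l) • Ω) - a p • Ω
  let Aw : PiLp 2 fun _ : ι × κ ↦ H := WithLp.toLp 2 fun p ↦ ∑ j, A p.1 j (w (j, p.2))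
  let v : PiLp 2 fun _ : ι × κ ↦ H := WithLp.toLp 2 fun p ↦
    ∑ j, A p.1 j (a (j, p.2) • Ω) - a p • Ω
  have hw : ‖w‖ ≤ γ * ‖a‖ := piLp_norm_le_of_forall_norm_slice_le (Equiv.refl _) w a hγ
    fun j ↦ hC (WithLp.toLp 2 fun l ↦ a (j, l))
  have hAw : ‖Aw‖ ≤ 1 * ‖w‖ := piLp_norm_le_of_forall_norm_slice_le (Equiv.prodComm κ ι) Aw w
    zero_le_one fun l ↦ by rw [one_mul]; exact hA₁ (WithLp.toLp 2 fun j ↦ w (j, l))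
  have hv : ‖v‖ ≤ α * ‖a‖ := piLp_norm_le_of_forall_norm_slice_le (Equiv.prodComm κ ι) v a hα
    fun l ↦ hA (WithLp.toLp 2 fun j ↦ a (j, l))
  have htelescope : blockMap (A ⊗ₖ C) (tensorVacuum Ω a) - tensorVacuum Ω a = Aw + v := by
    ext ⟨i, k⟩
    simp [blockMap_apply, tensorVacuum_apply, Aw, v, w, Fintype.sum_prod_type,
      Matrix.kroneckerMap_apply]
  rw [htelescope]
  linarith [norm_add_le Aw v]

end VacuumDefectLE

lemma norm_inner_sub_le_of_vacuumDefectLE {f : ι → E} (hf : Orthonormal 𝕜 f) {A : E →L[𝕜] E}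
    {D : Matrix ι ι (H →L[𝕜] H)} {Ω : H} {η : ℝ} (hΩ : ‖Ω‖ = 1) (hD : VacuumDefectLE Ω D η)
    (hA : ∀ I J, ⟪f I, A (f J)⟫_𝕜 = ⟪Ω, D I J Ω⟫_𝕜) {φ ψ : E}
    (hφ : φ ∈ Submodule.span 𝕜 (Set.range f)) (hψ : ψ ∈ Submodule.span 𝕜 (Set.range f)) :
    ‖⟪φ, (A - 1) ψ⟫_𝕜‖ ≤ η * ‖φ‖ * ‖ψ‖ := by
  let W := sumIsometry hf.orthogonalFamily
  have hsurj : ∀ χ ∈ Submodule.span 𝕜 (Set.range f), ∃ c, W c = χ := fun χ hχ ↦ by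
    obtain ⟨c, hc⟩ := (Submodule.mem_span_range_iff_exists_fun 𝕜).1 hχ
    exact ⟨WithLp.toLp 2 c, hc⟩
  obtain ⟨a, rfl⟩ := hsurj φ hφ
  obtain ⟨b, rfl⟩ := hsurj ψ hψ
  have hmatrix : ⟪W a, A (W b)⟫_𝕜 = ⟪tensorVacuum Ω a, blockMap D (tensorVacuum Ω b)⟫_𝕜 := by
    simp only [W, sumIsometry_apply, PiLp.inner_apply, blockMap_apply, tensorVacuum_apply, map_sum,
      sum_inner, inner_sum, map_smul, LinearIsometry.toSpanSingleton_apply, inner_smul_left,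
      inner_smul_right, Finset.mul_sum, hA]
    exact Finset.sum_comm
  calc ‖⟪W a, (A - 1) (W b)⟫_𝕜‖
      = ‖⟪tensorVacuum Ω a, blockMap D (tensorVacuum Ω b) - tensorVacuum Ω b⟫_𝕜‖ := by
        rw [sub_apply, one_apply_eq_self, inner_sub_right, inner_sub_right, hmatrix,
          W.inner_map_map, inner_tensorVacuum_self hΩ]
    _ ≤ ‖a‖ * (η * ‖b‖) := by
        grw [norm_inner_le_norm, norm_tensorVacuum hΩ, hD b]
    _ = η * ‖W a‖ * ‖W b‖ := by rw [W.norm_map, W.norm_map]; ring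

end BlockMap

section Compression

variable {𝕜 ι E H : Type*} [Fintype ι] [RCLike 𝕜]
  [NormedAddCommGroup H] [InnerProductSpace 𝕜 H] [NormedAddCommGroup E] [InnerProductSpace 𝕜 E]
  {V : ι → H →ₗᵢ[𝕜] E} (hV : OrthogonalFamily 𝕜 (fun _ ↦ H) V)
  {X : E →L[𝕜] E} {B : Matrix ι ι (H →L[𝕜] H)}
  (hB : ∀ i j ξ₁ ξ₂, ⟪ξ₁, B i j ξ₂⟫_𝕜 = ⟪V i ξ₁, X (V j ξ₂)⟫_𝕜)

include hB

lemma inner_blockMap_eq_inner_sumIsometry (x y : PiLp 2 fun _ : ι ↦ H) :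
    ⟪x, blockMap B y⟫_𝕜 = ⟪sumIsometry hV x, X (sumIsometry hV y)⟫_𝕜 := by
  simp only [PiLp.inner_apply, blockMap_apply, sumIsometry_apply, map_sum, sum_inner, inner_sum, hB]
  exact Finset.sum_comm

lemma norm_blockMap_le_norm_apply_sumIsometry (x : PiLp 2 fun _ : ι ↦ H) :
    ‖blockMap B x‖ ≤ ‖X (sumIsometry hV x)‖ :=
  norm_le_of_forall_inner_eq_inner_map (𝕜 := 𝕜) (sumIsometry hV)
    fun z ↦ inner_blockMap_eq_inner_sumIsometry hV hB z x

lemma norm_blockMap_sub_le_norm_apply_sumIsometry_sub (x : PiLp 2 fun _ : ι ↦ H) :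
    ‖blockMap B x - x‖ ≤ ‖X (sumIsometry hV x) - sumIsometry hV x‖ :=
  norm_le_of_forall_inner_eq_inner_map (𝕜 := 𝕜) (sumIsometry hV) fun z ↦ by
    rw [inner_sub_right, inner_sub_right, inner_blockMap_eq_inner_sumIsometry hV hB,
      LinearIsometry.inner_map_map]

end Compression

section OrderedPower

variable {ι κ R : Type*} [Monoid R]

/-- The `n`-fold ordered power of a matrix over a noncommutative monoid: its `(I, J)` entry is
`B (I 0) (J 0) * ⋯ * B (I (n - 1)) (J (n - 1))`. For the block matrix of an operator `U` this is the
block matrix of `U^{(n)}`. -/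
def orderedPower (B : Matrix ι κ R) (n : ℕ) : Matrix (Fin n → ι) (Fin n → κ) R :=
  Matrix.of fun I J ↦ (List.ofFn fun k ↦ B (I k) (J k)).prod

lemma orderedPower_succ (B : Matrix ι κ R) (n : ℕ) :
    orderedPower B (n + 1) = (B ⊗ₖ orderedPower B n).reindex
      (Fin.consEquiv fun _ ↦ ι) (Fin.consEquiv fun _ ↦ κ) := by
  ext I J
  simp [orderedPower, Matrix.kroneckerMap_apply, List.ofFn_succ, Fin.consEquiv, Fin.tail]

lemma vacuumDefectLE_orderedPower {𝕜 H : Type*} [RCLike 𝕜] [NormedAddCommGroup H]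
    [InnerProductSpace 𝕜 H] [Fintype ι] {Ω : H} {B : Matrix ι ι (H →L[𝕜] H)} {η : ℝ} (hη : 0 ≤ η)
    (hB₁ : ∀ x, ‖blockMap B x‖ ≤ ‖x‖) (hB : VacuumDefectLE Ω B η) (n : ℕ) :
    VacuumDefectLE Ω (orderedPower B n) (n * η) := by
  induction n with
  | zero =>
    intro a
    have hfix : blockMap (orderedPower B 0) (tensorVacuum Ω a) = tensorVacuum Ω a := by
      ext I
      simp [blockMap_apply, tensorVacuum_apply, orderedPower, Subsingleton.elim I default]
    simp [hfix]
  | succ n ih =>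
    rw [Nat.cast_succ, add_one_mul, add_comm (_ * η), orderedPower_succ]
    exact (hB.kronecker hB₁ hη (by positivity) ih).reindex _

end OrderedPower

section HilbertTensor

variable {𝕜 ι h H E : Type*} [RCLike 𝕜]
  [NormedAddCommGroup h] [InnerProductSpace 𝕜 h]
  [NormedAddCommGroup H] [InnerProductSpace 𝕜 H]
  [NormedAddCommGroup E] [InnerProductSpace 𝕜 E]

lemma norm_apply_sub_le_of_unit_norm {X : E →L[𝕜] E} (hX : ∀ z, ‖X z‖ ≤ ‖z‖) (L : h →ₗ[𝕜] E)
    {δ : ℝ} (hδ : ∀ u, ‖u‖ = 1 → ‖⟪L u, (X - 1) (L u)⟫_𝕜‖ ≤ δ) (u : h) :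
    ‖X (L u) - L u‖ ≤ √(2 * δ) * ‖u‖ := by
  rcases eq_or_ne u 0 with rfl | hu
  · simp
  set v := ((‖u‖⁻¹ : ℝ) : 𝕜) • u
  have hv : ‖v‖ = 1 := by simp [v, norm_smul, hu]
  have huv : u = (‖u‖ : 𝕜) • v := by simp [v, smul_smul, hu]
  have hunit : ‖X (L v) - L v‖ ≤ √(2 * δ) := Real.le_sqrt_of_sq_le <|
    (norm_sub_sq_le_two_mul_norm_inner_sub (𝕜 := 𝕜) (hX (L v))).trans
      (mul_le_mul_of_nonneg_left (hδ v hv) zero_le_two)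
  calc ‖X (L u) - L u‖ = ‖u‖ * ‖X (L v) - L v‖ := by
        conv_lhs => rw [huv]
        rw [map_smul, map_smul, ← smul_sub, norm_smul, RCLike.norm_ofReal, abs_norm]
    _ ≤ √(2 * δ) * ‖u‖ := by rw [mul_comm]; gcongr

variable {tmul : h →ₗ[𝕜] H →ₗ[𝕜] E}
  (htmul : ∀ (u v : h) (ξ ζ : H), ⟪tmul u ξ, tmul v ζ⟫_𝕜 = ⟪u, v⟫_𝕜 * ⟪ξ, ζ⟫_𝕜)

/-- The embedding `ξ ↦ u ⊗ ξ` of `H` in `h ⊗ H` given by a unit vector `u`. -/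
def tmulIsometry {u : h} (hu : ‖u‖ = 1) : H →ₗᵢ[𝕜] E :=
  (tmul u).isometryOfInner fun ξ ζ ↦ by simp [htmul, inner_self_eq_norm_sq_to_K, hu]

lemma tmulIsometry_apply {u : h} (hu : ‖u‖ = 1) (ξ : H) : tmulIsometry htmul hu ξ = tmul u ξ := rfl

variable {e : ι → h}

lemma orthogonalFamily_tmulIsometry (he : Orthonormal 𝕜 e) :
    OrthogonalFamily 𝕜 (fun _ ↦ H) fun i ↦ tmulIsometry htmul (he.1 i) :=
  fun i j hij ξ ζ ↦ by simp [tmulIsometry_apply, htmul, he.2 hij]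

lemma sumIsometry_tensorVacuum [Fintype ι] (he : Orthonormal 𝕜 e) (Ω : H)
    (a : EuclideanSpace 𝕜 ι) :
    sumIsometry (orthogonalFamily_tmulIsometry htmul he) (tensorVacuum Ω a) =
      tmul (sumIsometry he.orthogonalFamily a) Ω := by
  simp [sumIsometry_apply, tmulIsometry_apply, tensorVacuum_apply]

end HilbertTensor

section TensorPower

variable {𝕜 σ h K : Type*} [RCLike 𝕜]
  [NormedAddCommGroup h] [InnerProductSpace 𝕜 h]
  [NormedAddCommGroup K] [InnerProductSpace 𝕜 K] {t : (σ → h) → K}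

lemma exists_finiteDimensional_mem_span_image_pi [Finite σ] {φ : K}
    (hφ : φ ∈ Submodule.span 𝕜 (Set.range t)) : ∃ F : Submodule 𝕜 h, FiniteDimensional 𝕜 F ∧
      φ ∈ Submodule.span 𝕜 (t '' Set.univ.pi fun _ ↦ (F : Set h)) := by
  have mono {F G : Submodule 𝕜 h} (hFG : F ≤ G) :
      Submodule.span 𝕜 (t '' Set.univ.pi fun _ ↦ (F : Set h)) ≤
        Submodule.span 𝕜 (t '' Set.univ.pi fun _ ↦ (G : Set h)) :=
    Submodule.span_mono (Set.image_mono (Set.pi_mono fun _ _ ↦ hFG))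
  induction hφ using Submodule.span_induction with
  | mem x hx =>
    obtain ⟨u, rfl⟩ := hx
    exact ⟨Submodule.span 𝕜 (Set.range u), .span_of_finite 𝕜 (Set.finite_range u),
      Submodule.subset_span ⟨u, fun k _ ↦ Submodule.subset_span ⟨k, rfl⟩, rfl⟩⟩
  | zero => exact ⟨⊥, inferInstance, zero_mem _⟩
  | add x y _ _ hx hy =>
    obtain ⟨F, _, hx⟩ := hx
    obtain ⟨G, _, hy⟩ := hy
    exact ⟨F ⊔ G, inferInstance, add_mem (mono le_sup_left hx) (mono le_sup_right hy)⟩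
  | smul c x _ hx =>
    obtain ⟨F, hF, hx⟩ := hx
    exact ⟨F, hF, Submodule.smul_mem _ c hx⟩

variable [Fintype σ] (ht : ∀ u v : σ → h, ⟪t u, t v⟫_𝕜 = ∏ i, ⟪u i, v i⟫_𝕜)

include ht

lemma orthonormal_tensorPower_comp {ι : Type*} {e : ι → h} (he : Orthonormal 𝕜 e) :
    Orthonormal 𝕜 fun J : σ → ι ↦ t (e ∘ J) := by
  classical
  rw [orthonormal_iff_ite]
  intro I J
  simp [ht, orthonormal_iff_ite.1 he, Finset.prod_ite_zero, funext_iff]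

lemma tensorPower_mem_span_range_comp {ι : Type*} [Finite ι] {e : ι → h} {u : σ → h}
    (hu : ∀ k, u k ∈ Submodule.span 𝕜 (Set.range e)) :
    t u ∈ Submodule.span 𝕜 (Set.range fun J : σ → ι ↦ t (e ∘ J)) := by
  classical
  cases nonempty_fintype ι
  choose c hc using fun k ↦ (Submodule.mem_span_range_iff_exists_fun 𝕜).1 (hu k)
  have hmem (J : σ → ι) : (∏ k, c k (J k)) • t (e ∘ J) ∈
      Submodule.span 𝕜 (Set.range fun J : σ → ι ↦ t (e ∘ J)) :=
    Submodule.smul_mem _ _ (Submodule.subset_span ⟨J, rfl⟩)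
  have hexpand : t u = ∑ J : σ → ι, (∏ k, c k (J k)) • t (e ∘ J) := by
    refine eq_of_mem_span_of_forall_inner_eq (𝕜 := 𝕜) (Submodule.subset_span (Set.mem_range_self u))
      (Submodule.sum_mem _ fun J _ ↦ Submodule.span_mono ?_ (hmem J)) ?_
    · rintro _ ⟨J, rfl⟩
      exact Set.mem_range_self _
    · rintro _ ⟨w, rfl⟩
      simp only [ht, ← hc, inner_sum, inner_smul_right, Fintype.prod_sum, Finset.prod_mul_distrib,
        Function.comp_apply]
  exact hexpand ▸ Submodule.sum_mem _ fun J _ ↦ hmem J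

lemma exists_orthonormal_mem_span_range_comp {φ ψ : K} (hφ : φ ∈ Submodule.span 𝕜 (Set.range t))
    (hψ : ψ ∈ Submodule.span 𝕜 (Set.range t)) : ∃ (d : ℕ) (e : Fin d → h), Orthonormal 𝕜 e ∧
      φ ∈ Submodule.span 𝕜 (Set.range fun J : σ → Fin d ↦ t (e ∘ J)) ∧
      ψ ∈ Submodule.span 𝕜 (Set.range fun J : σ → Fin d ↦ t (e ∘ J)) := by
  obtain ⟨F, _, hφF⟩ := exists_finiteDimensional_mem_span_image_pi hφ
  obtain ⟨G, _, hψG⟩ := exists_finiteDimensional_mem_span_image_pi hψ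
  let β := stdOrthonormalBasis 𝕜 ↥(F ⊔ G)
  let e := fun i ↦ (β i : h)
  have hspan : Submodule.span 𝕜 (Set.range e) = F ⊔ G := by
    have hmap := congrArg (Submodule.map (F ⊔ G).subtype) β.toBasis.span_eq
    rwa [Submodule.map_span, ← Set.range_comp, Submodule.map_subtype_top] at hmap
  have hle {F' : Submodule 𝕜 h} (hF' : F' ≤ F ⊔ G) :
      Submodule.span 𝕜 (t '' Set.univ.pi fun _ ↦ (F' : Set h)) ≤
        Submodule.span 𝕜 (Set.range fun J : σ → _ ↦ t (e ∘ J)) := by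
    rw [Submodule.span_le]
    rintro _ ⟨u, hu, rfl⟩
    exact tensorPower_mem_span_range_comp ht fun k ↦ hspan.ge (hF' (hu k trivial))
  exact ⟨_, e, β.orthonormal.comp_linearIsometry (F ⊔ G).subtypeₗᵢ,
    hle le_sup_left hφF, hle le_sup_right hψG⟩

end TensorPower

section Expectation

variable {𝕜 h H E K : Type*} [RCLike 𝕜]
  [NormedAddCommGroup h] [InnerProductSpace 𝕜 h]
  [NormedAddCommGroup H] [InnerProductSpace 𝕜 H]
  [NormedAddCommGroup E] [InnerProductSpace 𝕜 E]
  [NormedAddCommGroup K] [InnerProductSpace 𝕜 K]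

lemma norm_expectation_sub_one_le (tmul : h →ₗ[𝕜] H →ₗ[𝕜] E)
    (htmul : ∀ (u v : h) (ξ ζ : H), ⟪tmul u ξ, tmul v ζ⟫_𝕜 = ⟪u, v⟫_𝕜 * ⟪ξ, ζ⟫_𝕜)
    {X : E →L[𝕜] E} (hX : ∀ z, ‖X z‖ ≤ ‖z‖) {op : h → h → H →L[𝕜] H}
    (hop : ∀ u v ξ₁ ξ₂, ⟪ξ₁, op u v ξ₂⟫_𝕜 = ⟪tmul u ξ₁, X (tmul v ξ₂)⟫_𝕜)
    {Ω : H} (hΩ : ‖Ω‖ = 1) {δ : ℝ}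
    (hδ : ∀ u, ‖u‖ = 1 → ‖⟪tmul u Ω, (X - 1) (tmul u Ω)⟫_𝕜‖ ≤ δ)
    {n : ℕ} {t : (Fin n → h) → K} (ht : ∀ u v, ⟪t u, t v⟫_𝕜 = ∏ i, ⟪u i, v i⟫_𝕜)
    (hdense : (Submodule.span 𝕜 (Set.range t)).topologicalClosure = ⊤) {A : K →L[𝕜] K}
    (hA : ∀ u v, ⟪t u, A (t v)⟫_𝕜 = ⟪Ω, (List.ofFn fun i ↦ op (u i) (v i)).prod Ω⟫_𝕜) :
    ‖A - 1‖ ≤ n * √(2 * δ) := by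
  have hspan := (Submodule.dense_iff_topologicalClosure_eq_top).2 hdense
  refine opNorm_le_of_dense_of_norm_inner_le hspan hspan (by positivity) fun φ hφ ψ hψ ↦ ?_
  obtain ⟨d, e, he, hφe, hψe⟩ := exists_orthonormal_mem_span_range_comp ht hφ hψ
  let B : Matrix (Fin d) (Fin d) (H →L[𝕜] H) := Matrix.of fun i j ↦ op (e i) (e j)
  have hV := orthogonalFamily_tmulIsometry htmul he
  have hB : ∀ i j ξ₁ ξ₂, ⟪ξ₁, B i j ξ₂⟫_𝕜 =
      ⟪tmulIsometry htmul (he.1 i) ξ₁, X (tmulIsometry htmul (he.1 j) ξ₂)⟫_𝕜 :=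
    fun i j ↦ hop (e i) (e j)
  have hcontract : ∀ x, ‖blockMap B x‖ ≤ ‖x‖ := fun x ↦
    (norm_blockMap_le_norm_apply_sumIsometry hV hB x).trans <|
      (hX _).trans_eq (LinearIsometry.norm_map _ _)
  have hdefect : VacuumDefectLE Ω B √(2 * δ) := fun a ↦ calc
    ‖blockMap B (tensorVacuum Ω a) - tensorVacuum Ω a‖
        ≤ ‖X (sumIsometry hV (tensorVacuum Ω a)) - sumIsometry hV (tensorVacuum Ω a)‖ :=
      norm_blockMap_sub_le_norm_apply_sumIsometry_sub hV hB _
    _ ≤ √(2 * δ) * ‖sumIsometry he.orthogonalFamily a‖ := by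
      rw [sumIsometry_tensorVacuum htmul he]
      exact norm_apply_sub_le_of_unit_norm hX (tmul.flip Ω) hδ _
    _ = √(2 * δ) * ‖a‖ := by rw [LinearIsometry.norm_map]
  exact norm_inner_sub_le_of_vacuumDefectLE (orthonormal_tensorPower_comp ht he) hΩ
    (vacuumDefectLE_orderedPower (Real.sqrt_nonneg _) hcontract hdefect n)
    (fun I J ↦ hA (e ∘ I) (e ∘ J)) hφe hψe

theorem stmt8_general {α : Type*} {l : Filter α} (tmul : h →ₗ[𝕜] H →ₗ[𝕜] E)
    (htmul : ∀ (u v : h) (ξ ζ : H), ⟪tmul u ξ, tmul v ζ⟫_𝕜 = ⟪u, v⟫_𝕜 * ⟪ξ, ζ⟫_𝕜)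
    (opAtE : (E →L[𝕜] E) → h → h → (H →L[𝕜] H))
    (hopAtE : ∀ (X : E →L[𝕜] E) (u v : h) (ξ₁ ξ₂ : H),
      ⟪ξ₁, opAtE X u v ξ₂⟫_𝕜 = ⟪tmul u ξ₁, X (tmul v ξ₂)⟫_𝕜)
    (Ω : H) (hΩ : ‖Ω‖ = 1) (U : α → E →L[𝕜] E) (hU : ∀ᶠ s in l, ∀ z, ‖U s z‖ ≤ ‖z‖)
    (hB : ∀ δ : ℝ, 0 < δ → ∀ᶠ s in l, ∀ u : h, ‖u‖ = 1 → ‖⟪Ω, opAtE (U s - 1) u u Ω⟫_𝕜‖ < δ)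
    (n : ℕ) (tmuln : (Fin n → h) → K)
    (htmuln : ∀ u v : Fin n → h, ⟪tmuln u, tmuln v⟫_𝕜 = ∏ i, ⟪u i, v i⟫_𝕜)
    (hdenseK : (Submodule.span 𝕜 (Set.range tmuln)).topologicalClosure = ⊤)
    (T : α → K →L[𝕜] K)
    (hT : ∀ᶠ s in l, ∀ u v : Fin n → h, ⟪tmuln u, T s (tmuln v)⟫_𝕜 =
      ⟪Ω, (List.ofFn fun i ↦ opAtE (U s) (u i) (v i)).prod Ω⟫_𝕜) :
    Filter.Tendsto (fun s ↦ ‖T s - 1‖) l (nhds 0) := by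
  have hlim : Filter.Tendsto (fun δ : ℝ ↦ n * √(2 * δ)) (nhdsWithin 0 (Set.Ioi 0)) (nhds 0) :=
    tendsto_nhdsWithin_of_tendsto_nhds <| Continuous.tendsto' (by fun_prop) _ _ (by simp)
  rw [Metric.tendsto_nhds]
  intro ρ hρ
  obtain ⟨δ, hδρ, hδ⟩ := ((hlim.eventually_lt_const hρ).and self_mem_nhdsWithin).exists
  filter_upwards [hU, hB δ hδ, hT] with s hUs hBs hTs
  rw [dist_zero_right, norm_norm]
  refine (norm_expectation_sub_one_le tmul htmul hUs (hopAtE (U s)) hΩ (fun u hu ↦ ?_) htmuln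
    hdenseK hTs).trans_lt hδρ
  rw [← hopAtE]
  exact (hBs u hu).le

end Expectation

end

theorem stmt8
    {h H E K : Type*}
    [NormedAddCommGroup h] [InnerProductSpace ℂ h] [CompleteSpace h]
    [TopologicalSpace.SeparableSpace h]
    [NormedAddCommGroup H] [InnerProductSpace ℂ H] [CompleteSpace H]
    [TopologicalSpace.SeparableSpace H]
    [NormedAddCommGroup E] [InnerProductSpace ℂ E] [CompleteSpace E]
    [NormedAddCommGroup K] [InnerProductSpace ℂ K] [CompleteSpace K]
    (tmul : h →ₗ[ℂ] H →ₗ[ℂ] E)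
    (htmul : ∀ (u v : h) (ξ ζ : H), ⟪tmul u ξ, tmul v ζ⟫ = ⟪u, v⟫ * ⟪ξ, ζ⟫)
    (hdenseE : (Submodule.span ℂ (Set.range fun p : h × H => tmul p.1 p.2)).topologicalClosure = ⊤)
    (opAtE : (E →L[ℂ] E) → h → h → (H →L[ℂ] H))
    (hopAtE : ∀ (T : E →L[ℂ] E) (u v : h) (ξ₁ ξ₂ : H),
      ⟪ξ₁, opAtE T u v ξ₂⟫ = ⟪tmul u ξ₁, T (tmul v ξ₂)⟫)
    (Ω : H) (hΩ : ‖Ω‖ = 1)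
    (U : ℝ → ℝ → (E →L[ℂ] E))
    (hUunitary : ∀ s t : ℝ, 0 ≤ s → s ≤ t →
      adjoint (U s t) * U s t = 1 ∧ U s t * adjoint (U s t) = 1)
    -- (A1) evolution
    (hA1 : ∀ r s t : ℝ, 0 ≤ r → r ≤ s → s ≤ t → U r s * U s t = U r t)
    -- (A2a) commutation of increments over disjoint intervals
    (hA2a : ∀ s₁ t₁ s₂ t₂ : ℝ, 0 ≤ s₁ → s₁ ≤ t₁ → 0 ≤ s₂ → s₂ ≤ t₂ →
      Disjoint (Set.Ico s₁ t₁) (Set.Ico s₂ t₂) →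
      ∀ u₁ v₁ u₂ v₂ : h,
        Commute (opAtE (U s₁ t₁) u₁ v₁) (opAtE (U s₂ t₂) u₂ v₂) ∧
        Commute (opAtE (U s₁ t₁) u₁ v₁) (opAtE (adjoint (U s₂ t₂)) u₂ v₂))
    -- (A2b) factorisation of vacuum expectations over disjoint intervals
    (hA2b : ∀ s₁ t₁ s₂ t₂ : ℝ, 0 ≤ s₁ → s₁ ≤ t₁ → 0 ≤ s₂ → s₂ ≤ t₂ →
      Disjoint (Set.Ico s₁ t₁) (Set.Ico s₂ t₂) →
      ∀ (N M : ℕ) (a b : Fin N → ℝ) (q r : Fin M → ℝ)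
        (ε : Fin N → Bool) (ε' : Fin M → Bool)
        (u v : Fin N → h) (p w : Fin M → h),
        (∀ i, s₁ ≤ a i ∧ a i ≤ b i ∧ b i ≤ t₁) →
        (∀ i j : Fin N, i < j → b i ≤ a j) →
        (∀ i, s₂ ≤ q i ∧ q i ≤ r i ∧ r i ≤ t₂) →
        (∀ i j : Fin M, i < j → r i ≤ q j) →
        ⟪Ω, (((List.ofFn fun i => opAtE
                (if ε i then adjoint (U (a i) (b i)) else U (a i) (b i)) (u i) (v i)).prod) *
             ((List.ofFn fun i => opAtE
                (if ε' i then adjoint (U (q i) (r i)) else U (q i) (r i)) (p i) (w i)).prod)) Ω⟫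
          = ⟪Ω, ((List.ofFn fun i => opAtE
                  (if ε i then adjoint (U (a i) (b i)) else U (a i) (b i)) (u i) (v i)).prod) Ω⟫
            * ⟪Ω, ((List.ofFn fun i => opAtE
                  (if ε' i then adjoint (U (q i) (r i)) else U (q i) (r i)) (p i) (w i)).prod) Ω⟫)
    -- (A3) stationarity
    (hA3 : ∀ (s t : ℝ), 0 ≤ s → s ≤ t → ∀ (N : ℕ) (ε : Fin N → Bool) (u v : Fin N → h),
      ⟪Ω, ((List.ofFn fun i => opAtE
              (if ε i then adjoint (U s t) else U s t) (u i) (v i)).prod) Ω⟫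
        = ⟪Ω, ((List.ofFn fun i => opAtE
              (if ε i then adjoint (U 0 (t - s)) else U 0 (t - s)) (u i) (v i)).prod) Ω⟫)
    -- (B) uniform continuity
    (hB : ∀ δ : ℝ, 0 < δ → ∃ τ : ℝ, 0 < τ ∧ ∀ t : ℝ, 0 < t → t < τ →
      ∀ u v : h, ‖u‖ = 1 → ‖v‖ = 1 →
        ‖⟪Ω, (opAtE (U 0 t - 1) u v) Ω⟫‖ < δ)
    (n : ℕ) (hn : 1 ≤ n)
    (tmuln : (Fin n → h) → K)
    (htmuln : ∀ u v : Fin n → h, ⟪tmuln u, tmuln v⟫ = ∏ i, ⟪u i, v i⟫)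
    (hdenseK : (Submodule.span ℂ (Set.range tmuln)).topologicalClosure = ⊤)
    -- the expectation semigroup T_t^{(n)}
    (T : ℝ → (K →L[ℂ] K))
    (hT : ∀ (t : ℝ) (u v : Fin n → h),
      ⟪tmuln u, T t (tmuln v)⟫
        = ⟪Ω, ((List.ofFn fun i => opAtE (U 0 t) (u i) (v i)).prod) Ω⟫) :
    Filter.Tendsto (fun t : ℝ => ‖T t - 1‖) (nhdsWithin 0 (Set.Ioi 0)) (nhds 0) := by
  refine stmt8_general tmul htmul opAtE hopAtE Ω hΩ (fun t ↦ U 0 t) ?_ (fun δ hδ ↦ ?_)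
    n tmuln htmuln hdenseK T (.of_forall hT)
  · filter_upwards [self_mem_nhdsWithin] with t ht z
    exact ((norm_map_iff_adjoint_comp_self (U 0 t)).2 (hUunitary 0 t le_rfl (le_of_lt ht)).1 z).le
  · obtain ⟨τ, hτ, hbound⟩ := hB δ hδ
    filter_upwards [Ioo_mem_nhdsGT hτ] with t ht u hu using hbound t ht.1 ht.2 u u hu hu
end

section
/- Let {U_t}_{t≥0} be unitary operators on h⊗H and Ω a unit vector in H. For all t ≥ 0, m, n ≥ 1, all product vectors v ∈ h^{⊗m} and w ∈ h^{⊗n}, and arbitrary orthonormal bases {φ_k^{(m)}} of h^{⊗m} and {φ_k^{(n)}} of h^{⊗n}: Σ_k |⟨U_t^{(m)}(φ_k^{(m)}, v)Ω, U_t^{(n)}(φ_k^{(n)}, w)Ω⟩ − conj(⟨φ_k^{(m)}, v⟩)·⟨φ_k^{(n)}, w⟩| ≤ √2·‖v‖·‖w‖·(√‖T_t^{(m)} − 1‖ + √‖T_t^{(n)} − 1‖). (This yields uniform continuity of the semigroup Z_t^{(m,n)} in trace norm.) -/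
/-!
STATEMENT 13: Let `{U_t}` be unitaries on `h ⊗ H` and `Ω` a unit vector of `H`.  For
`t ≥ 0`, `m, n ≥ 1`, product vectors `v ∈ h^{⊗m}`, `w ∈ h^{⊗n}` and arbitrary orthonormal
bases `{φ_k^{(m)}}` of `h^{⊗m}` and `{φ_k^{(n)}}` of `h^{⊗n}` (indexed by a common set):
`Σ_k |⟨U_t^{(m)}(φ_k^{(m)}, v)Ω, U_t^{(n)}(φ_k^{(n)}, w)Ω⟩ − conj(⟨φ_k^{(m)}, v⟩)·⟨φ_k^{(n)}, w⟩|
  ≤ √2·‖v‖·‖w‖·(√‖T_t^{(m)} − 1‖ + √‖T_t^{(n)} − 1‖)`.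

Modelling: `E` models `h ⊗ H` (map `tmul`), `opAtE` gives `T(u,v)` on `H`; `Km`, `Kn`
model `h^{⊗m}`, `h^{⊗n}` (maps `tmulm`, `tmuln`); `Fm`, `Fn` model `h^{⊗m} ⊗ H`,
`h^{⊗n} ⊗ H` (maps `tmulFm`, `tmulFn`), all with characteristic inner-product identities
and dense spans; `opAtFm`, `opAtFn` give `T(x,y)` on `H` for operators on `Fm`, `Fn`.
`Um t`, `Un t` are the ampliations `U_t^{(m)}`, `U_t^{(n)}`, characterised on product
vectors by the slot-wise ordered products, and `Tm`, `Tn` are the expectation semigroups.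
The conclusion asserts summability together with the bound on the sum.
-/

open scoped ComplexInnerProductSpace
open ContinuousLinearMap

/-!
For an orthonormal family `(φ_k)` of `h^{⊗m}` the subspaces `φ_k ⊗ H` of `h^{⊗m} ⊗ H` are mutually
orthogonal, and `A(φ_k, v)Ω` is the component of `A(v ⊗ Ω)` in `φ_k ⊗ H`.  Bessel's inequality hence
bounds the sum of the squares `‖A(φ_k, v)Ω‖²` by `‖A(v ⊗ Ω)‖²`.  This is applied to `A = U^{(m)}`,
`A = 1` and `A = U^{(m)} - 1`.  In the last case `‖U^{(m)}f - f‖² ≤ 2 Re ⟪f, f - U^{(m)}f⟫` with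
`f = v ⊗ Ω`, and the right-hand side is `2 Re ⟪v, (1 - T^{(m)})v⟫ ≤ 2 ‖v‖² ‖T^{(m)} - 1‖`.  The
Cauchy-Schwarz inequality over `k` then gives the estimate.

What remains is that `U^{(m)}` is a contraction, although only its matrix elements between product
vectors are given.  Factors are peeled off one at a time: the first factor of the ordered product is
moved to the left of the inner product, where `U*` replaces a sum of product vectors by its
components along an orthonormal basis of the span of the first factors on the right.  Bessel's
inequality and the Schur product theorem show that this does not increase norms.
-/

section

open Matrix
open scoped InnerProductSpace ComplexOrder

variable {𝕜 h H E K F ι κ I J L : Type*} [RCLike 𝕜]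
  [NormedAddCommGroup h] [InnerProductSpace 𝕜 h]
  [NormedAddCommGroup H] [InnerProductSpace 𝕜 H]
  [NormedAddCommGroup E] [InnerProductSpace 𝕜 E]
  [NormedAddCommGroup K] [InnerProductSpace 𝕜 K]
  [NormedAddCommGroup F] [InnerProductSpace 𝕜 F]

/-- `τ` is a model `(x, ξ) ↦ x ⊗ ξ` of the Hilbert space tensor product of `K` and `H` inside `F`.
That such vectors span a dense subspace of `F` is a separate hypothesis where it matters. -/
def IsTensorMap (τ : K →ₗ[𝕜] H →ₗ[𝕜] F) : Prop :=
  ∀ (x y : K) (ξ ζ : H), ⟪τ x ξ, τ y ζ⟫_𝕜 = ⟪x, y⟫_𝕜 * ⟪ξ, ζ⟫_𝕜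

variable (𝕜) in
/-- `σ` is a model `(u_i)_i ↦ ⨂ u_i` of the Hilbert space tensor power of `h` inside `K`, with
density of the span again kept separate; multilinearity of `σ` is implied. -/
def IsPowerTensorMap [Fintype I] (σ : (I → h) → K) : Prop :=
  ∀ u v : I → h, ⟪σ u, σ v⟫_𝕜 = ∏ i, ⟪u i, v i⟫_𝕜

/-- `A` is the family of operators `A(u, v) = R(u, v)` on `H` attached to an operator `R` on the
tensor product modelled by `τ`. -/
def IsMatrixElement (τ : K →ₗ[𝕜] H →ₗ[𝕜] F) (R : F →L[𝕜] F) (A : K → K → H →L[𝕜] H) : Prop :=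
  ∀ (u v : K) (ξ ζ : H), ⟪ξ, A u v ζ⟫_𝕜 = ⟪τ u ξ, R (τ v ζ)⟫_𝕜

/-- `V` is the ampliation `U^{(m)}` to `h^{⊗m} ⊗ H` of the operator `U` on `h ⊗ H` with matrix
elements `A`: between product vectors it is given by the ordered product of the `A (x i) (y i)`. -/
def IsAmpliation {m : ℕ} (σ : (Fin m → h) → K) (τ : K →ₗ[𝕜] H →ₗ[𝕜] F) (A : h → h → H →L[𝕜] H)
    (V : F →L[𝕜] F) : Prop :=
  ∀ (x y : Fin m → h) (ξ ζ : H),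
    ⟪τ (σ x) ξ, V (τ (σ y) ζ)⟫_𝕜 = ⟪ξ, (List.ofFn fun i => A (x i) (y i)).prod ζ⟫_𝕜

/-! ### Tensor maps and matrix elements -/

namespace IsTensorMap

variable {τ : K →ₗ[𝕜] H →ₗ[𝕜] F}

theorem norm_apply (hτ : IsTensorMap τ) (x : K) (ξ : H) : ‖τ x ξ‖ = ‖x‖ * ‖ξ‖ := by
  have h_sq : ‖τ x ξ‖ ^ 2 = (‖x‖ * ‖ξ‖) ^ 2 := by
    have h_inner := hτ x x ξ ξ
    simp only [inner_self_eq_norm_sq_to_K] at h_inner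
    rw [mul_pow]
    exact_mod_cast h_inner
  exact (pow_left_inj₀ (norm_nonneg _) (by positivity) two_ne_zero).mp h_sq

theorem norm_sum_sq (hτ : IsTensorMap τ) {φ : ι → K} (hφ : Orthonormal 𝕜 φ) (ξ : ι → H)
    (s : Finset ι) : ‖∑ k ∈ s, τ (φ k) (ξ k)‖ ^ 2 = ∑ k ∈ s, ‖ξ k‖ ^ 2 := by
  classical
  rw [← RCLike.ofReal_inj (K := 𝕜)]
  push_cast
  simp_rw [← inner_self_eq_norm_sq_to_K (𝕜 := 𝕜), sum_inner, inner_sum, hτ _,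
    orthonormal_iff_ite.mp hφ, ite_mul, one_mul, zero_mul]
  exact Finset.sum_congr rfl fun k hk => by rw [Finset.sum_ite_eq, if_pos hk]

theorem sum_norm_sq_le (hτ : IsTensorMap τ) {φ : ι → K} (hφ : Orthonormal 𝕜 φ) {f : F}
    {b : ι → H} (hb : ∀ k ξ, ⟪ξ, b k⟫_𝕜 = ⟪τ (φ k) ξ, f⟫_𝕜) (s : Finset ι) :
    ∑ k ∈ s, ‖b k‖ ^ 2 ≤ ‖f‖ ^ 2 := by
  set P : F := ∑ k ∈ s, τ (φ k) (b k)
  have hP : ‖P‖ ^ 2 = ∑ k ∈ s, ‖b k‖ ^ 2 := hτ.norm_sum_sq hφ b s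
  have h_inner : ⟪P, f⟫_𝕜 = ((‖P‖ ^ 2 : ℝ) : 𝕜) := by
    rw [hP, sum_inner]
    push_cast
    exact Finset.sum_congr rfl fun k _ => by rw [← hb, inner_self_eq_norm_sq_to_K]
  have h_le : ‖P‖ ^ 2 ≤ ‖P‖ * ‖f‖ := by
    simpa [h_inner] using norm_inner_le_norm (𝕜 := 𝕜) P f
  rw [← hP]
  nlinarith [sq_nonneg (‖P‖ - ‖f‖)]

theorem isMatrixElement_one (hτ : IsTensorMap τ) :
    IsMatrixElement τ 1 fun u v => ⟪u, v⟫_𝕜 • (1 : H →L[𝕜] H) := fun u v ξ ζ => by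
  simp [hτ u v ξ ζ, inner_smul_right]

theorem dense_span_of_dense_span (hτ : IsTensorMap τ)
    (hτ_dense : (Submodule.span 𝕜 (Set.range fun p : K × H => τ p.1 p.2)).topologicalClosure = ⊤)
    {σ : κ → K} (hσ_dense : (Submodule.span 𝕜 (Set.range σ)).topologicalClosure = ⊤) :
    Dense (Submodule.span 𝕜 (Set.range fun p : κ × H => τ (σ p.1) p.2) : Set F) := by
  rw [Submodule.dense_iff_topologicalClosure_eq_top, eq_top_iff, ← hτ_dense]
  refine Submodule.topologicalClosure_minimal _ (Submodule.span_le.mpr ?_)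
    (Submodule.isClosed_topologicalClosure _)
  rintro _ ⟨⟨x, ξ⟩, rfl⟩
  let tensorRight : K →L[𝕜] F := (τ.flip ξ).mkContinuous ‖ξ‖ fun y => by
    rw [LinearMap.flip_apply, hτ.norm_apply, mul_comm]
  have hx : x ∈ (Submodule.span 𝕜 (Set.range σ)).topologicalClosure := hσ_dense ▸ Submodule.mem_top
  refine Submodule.topologicalClosure_mono ?_
    (Submodule.topologicalClosure_map tensorRight _ (Submodule.mem_map_of_mem hx))
  rw [Submodule.map_span]
  refine Submodule.span_mono ?_
  rintro _ ⟨_, ⟨a, rfl⟩, rfl⟩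
  exact ⟨(a, ξ), rfl⟩

end IsTensorMap

namespace IsMatrixElement

variable {τ : K →ₗ[𝕜] H →ₗ[𝕜] F} {R S : F →L[𝕜] F} {A B : K → K → H →L[𝕜] H}

theorem sub (hA : IsMatrixElement τ R A) (hB : IsMatrixElement τ S B) :
    IsMatrixElement τ (R - S) fun u v => A u v - B u v := fun u v ξ ζ => by
  simp [inner_sub_right, hA u v ξ ζ, hB u v ξ ζ]

theorem adjoint [CompleteSpace H] [CompleteSpace F] (hA : IsMatrixElement τ R A) :
    IsMatrixElement τ (adjoint R) fun u v => ContinuousLinearMap.adjoint (A v u) :=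
  fun u v ξ ζ => by
    rw [ContinuousLinearMap.adjoint_inner_right, ContinuousLinearMap.adjoint_inner_right,
      ← inner_conj_symm, hA, inner_conj_symm]

theorem apply_sum_smul (hA : IsMatrixElement τ R A) (s : Finset κ) (u : K) (c : κ → 𝕜)
    (e : κ → K) (ζ : H) : A u (∑ a ∈ s, c a • e a) ζ = ∑ a ∈ s, c a • A u (e a) ζ := by
  refine ext_inner_left 𝕜 fun ξ => ?_
  simp [inner_sum, inner_smul_right, hA _ _ _ _]

theorem sqrt_sum_norm_sq_le (hτ : IsTensorMap τ) (hA : IsMatrixElement τ R A) {φ : ι → K}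
    (hφ : Orthonormal 𝕜 φ) (v : K) (ζ : H) (s : Finset ι) :
    √(∑ k ∈ s, ‖A (φ k) v ζ‖ ^ 2) ≤ ‖R (τ v ζ)‖ :=
  Real.sqrt_le_iff.mpr
    ⟨norm_nonneg _, hτ.sum_norm_sq_le hφ (fun k ξ => hA (φ k) v ξ ζ) s⟩

end IsMatrixElement

/-! ### Norms of sums of product vectors -/

theorem exists_orthonormal_sum_inner_smul_eq [Finite J] (y : J → h) :
    ∃ (N : ℕ) (e : Fin N → h), Orthonormal 𝕜 e ∧ ∀ j, ∑ a, ⟪e a, y j⟫_𝕜 • e a = y j := by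
  let W := Submodule.span 𝕜 (Set.range y)
  have : FiniteDimensional 𝕜 W := FiniteDimensional.span_of_finite 𝕜 (Set.finite_range y)
  let e := stdOrthonormalBasis 𝕜 W
  refine ⟨_, fun a => (e a : h), e.orthonormal.comp_linearIsometry W.subtypeₗᵢ, fun j => ?_⟩
  have h_expand := e.sum_repr' ⟨y j, Submodule.subset_span ⟨j, rfl⟩⟩
  simpa using congrArg W.subtype h_expand

variable (𝕜) in
/-- The Gram matrix of the product vectors `⨂ x_j(i)`, written without reference to a model of the
tensor power. -/
def prodGram [Fintype I] (x : J → I → h) : Matrix J J 𝕜 :=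
  Matrix.of fun j k => ∏ i, ⟪x j i, x k i⟫_𝕜

theorem posSemidef_prodGram [Finite J] [Fintype I] (x : J → I → h) :
    (prodGram 𝕜 x).PosSemidef := by
  classical
  suffices h_finset : ∀ s : Finset I,
      (Matrix.of fun j k => ∏ i ∈ s, ⟪x j i, x k i⟫_𝕜 : Matrix J J 𝕜).PosSemidef from
    h_finset Finset.univ
  intro s
  induction s using Finset.induction_on with
  | empty =>
    convert posSemidef_gram 𝕜 (fun _ : J => (1 : 𝕜)) using 1
    ext j k
    simp
  | insert i s hi ih =>
    convert (posSemidef_gram 𝕜 fun j => x j i).hadamard ih using 1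
    ext j k
    simp [Finset.prod_insert hi]

theorem prodGram_succ {m : ℕ} (x : J → Fin (m + 1) → h) (j k : J) :
    prodGram 𝕜 x j k = prodGram 𝕜 (fun j => Fin.tail (x j)) j k * ⟪x j 0, x k 0⟫_𝕜 := by
  simp [prodGram, Fin.prod_univ_succ, Fin.tail, mul_comm]

variable [Fintype J] [Fintype L]

variable (𝕜) in
/-- The squared norm of `∑ j, (⨂ x_j(i)) ⊗ ξ_j`, written without reference to a model of the
tensor product. -/
def prodSumNormSq [Fintype I] (x : J → I → h) (ξ : J → H) : ℝ :=
  RCLike.re (∑ j, ∑ k, prodGram 𝕜 x j k * ⟪ξ j, ξ k⟫_𝕜)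

theorem re_sum_mul_nonneg_of_posSemidef {M N : Matrix J J 𝕜} (hM : M.PosSemidef)
    (hN : N.PosSemidef) : 0 ≤ RCLike.re (∑ j, ∑ k, M j k * N j k) := by
  simpa [dotProduct, mulVec] using (hM.hadamard hN).re_dotProduct_nonneg 1

theorem prodSumNormSq_nonneg [Fintype I] (x : J → I → h) (ξ : J → H) :
    0 ≤ prodSumNormSq 𝕜 x ξ :=
  re_sum_mul_nonneg_of_posSemidef (posSemidef_prodGram x) (posSemidef_gram 𝕜 ξ)

theorem prodSumNormSq_of_isEmpty [Fintype I] [IsEmpty I] (x : J → I → h) (ξ : J → H) :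
    prodSumNormSq 𝕜 x ξ = ‖∑ j, ξ j‖ ^ 2 := by
  rw [← inner_self_eq_norm_sq (𝕜 := 𝕜), sum_inner]
  simp [prodSumNormSq, prodGram, inner_sum]

theorem IsTensorMap.norm_sum_prod_sq [Fintype I] {σ : (I → h) → K} {τ : K →ₗ[𝕜] H →ₗ[𝕜] F}
    (hτ : IsTensorMap τ) (hσ : IsPowerTensorMap 𝕜 σ) (x : J → I → h) (ξ : J → H) :
    ‖∑ j, τ (σ (x j)) (ξ j)‖ ^ 2 = prodSumNormSq 𝕜 x ξ := by
  rw [← inner_self_eq_norm_sq (𝕜 := 𝕜), sum_inner]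
  simp [prodSumNormSq, prodGram, inner_sum, hτ _, hσ _]

theorem posSemidef_gram_sub_sum_gram [Fintype κ] {z : J → E} {b : κ → J → H}
    (hb : ∀ c : J → 𝕜, ∑ a, ‖∑ j, c j • b a j‖ ^ 2 ≤ ‖∑ j, c j • z j‖ ^ 2) :
    (gram 𝕜 z - ∑ a, gram 𝕜 (b a)).PosSemidef := by
  refine .of_dotProduct_mulVec_nonneg ((isHermitian_gram 𝕜 z).sub ?_) fun c => ?_
  · exact (posSemidef_sum _ fun a _ => posSemidef_gram 𝕜 (b a)).isHermitian
  · rw [sub_mulVec, dotProduct_sub, sum_mulVec, dotProduct_sum, sub_nonneg]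
    simp_rw [star_dotProduct_gram_mulVec, inner_self_eq_norm_sq_to_K]
    exact_mod_cast hb c

theorem sum_prodSumNormSq_tail_le [Fintype κ] {m : ℕ} {τ : h →ₗ[𝕜] H →ₗ[𝕜] E}
    (hτ : IsTensorMap τ) {R : E →L[𝕜] E} (hR : ‖R‖ ≤ 1) {A : h → h → H →L[𝕜] H}
    (hA : IsMatrixElement τ R A) {e : κ → h} (he : Orthonormal 𝕜 e)
    (x : J → Fin (m + 1) → h) (ξ : J → H) :
    ∑ a, prodSumNormSq 𝕜 (fun j => Fin.tail (x j)) (fun j => A (e a) (x j 0) (ξ j)) ≤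
      prodSumNormSq 𝕜 x ξ := by
  have h_bessel (c : J → 𝕜) : ∑ a, ‖∑ j, c j • A (e a) (x j 0) (ξ j)‖ ^ 2 ≤
      ‖∑ j, c j • τ (x j 0) (ξ j)‖ ^ 2 := by
    refine (hτ.sum_norm_sq_le he (f := R (∑ j, c j • τ (x j 0) (ξ j))) ?_ _).trans ?_
    · intro a η
      simp [inner_sum, inner_smul_right, hA _ _ _ _]
    · gcongr
      exact (R.le_of_opNorm_le hR _).trans_eq (one_mul _)
  have h_schur := re_sum_mul_nonneg_of_posSemidef
    (posSemidef_prodGram (𝕜 := 𝕜) fun j => Fin.tail (x j)) (posSemidef_gram_sub_sum_gram h_bessel)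
  simp only [Matrix.sub_apply, Matrix.sum_apply, gram_apply, hτ _, mul_sub, Finset.mul_sum,
    Finset.sum_sub_distrib, map_sub, sub_nonneg, ← mul_assoc, ← prodGram_succ] at h_schur
  refine le_trans (le_of_eq ?_) h_schur
  simp_rw [prodSumNormSq, ← map_sum, Finset.sum_comm (s := Finset.univ (α := κ))]

theorem sum_prodSumNormSq_tail_smul [Fintype κ] {m : ℕ} {e : κ → h} {y : L → Fin (m + 1) → h}
    (he : ∀ l, ∑ a, ⟪e a, y l 0⟫_𝕜 • e a = y l 0) (ζ : L → H) :
    ∑ a, prodSumNormSq 𝕜 (fun l => Fin.tail (y l)) (fun l => ⟪e a, y l 0⟫_𝕜 • ζ l) =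
      prodSumNormSq 𝕜 y ζ := by
  have h_parseval (l l' : L) :
      ⟪y l 0, y l' 0⟫_𝕜 = ∑ a, ⟪y l 0, e a⟫_𝕜 * ⟪e a, y l' 0⟫_𝕜 := by
    conv_lhs => rw [← he l', inner_sum]
    simp [inner_smul_right, mul_comm]
  simp_rw [prodSumNormSq, ← map_sum, Finset.sum_comm (s := Finset.univ (α := κ)), prodGram_succ,
    h_parseval, Finset.mul_sum, Finset.sum_mul, inner_smul_left, inner_smul_right, inner_conj_symm,
    mul_assoc]

/-! ### The ampliation of a contraction -/

theorem norm_sum_inner_prod_le [CompleteSpace H] [CompleteSpace E] {τ : h →ₗ[𝕜] H →ₗ[𝕜] E}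
    (hτ : IsTensorMap τ) {U : E →L[𝕜] E} (hU : ‖U‖ ≤ 1) {A : h → h → H →L[𝕜] H}
    (hA : IsMatrixElement τ U A) {m : ℕ} (x : J → Fin m → h) (y : L → Fin m → h)
    (ξ : J → H) (ζ : L → H) :
    ‖∑ j, ∑ l, ⟪ξ j, (List.ofFn fun i => A (x j i) (y l i)).prod (ζ l)⟫_𝕜‖ ≤
      √(prodSumNormSq 𝕜 x ξ) * √(prodSumNormSq 𝕜 y ζ) := by
  induction m generalizing ξ ζ with
  | zero =>
    simp_rw [prodSumNormSq_of_isEmpty, Real.sqrt_sq (norm_nonneg _), List.ofFn_zero,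
      List.prod_nil, one_apply_eq_self, ← inner_sum, ← sum_inner]
    exact norm_inner_le_norm _ _
  | succ m ih =>
    obtain ⟨N, e, he, he_sum⟩ := exists_orthonormal_sum_inner_smul_eq (𝕜 := 𝕜) fun l => y l 0
    let ξ' (a : Fin N) (j : J) : H := adjoint (A (x j 0) (e a)) (ξ j)
    let ζ' (a : Fin N) (l : L) : H := ⟪e a, y l 0⟫_𝕜 • ζ l
    have h_peel (j : J) (l : L) :
        ⟪ξ j, (List.ofFn fun i => A (x j i) (y l i)).prod (ζ l)⟫_𝕜 = ∑ a, ⟪ξ' a j,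
          (List.ofFn fun i => A (Fin.tail (x j) i) (Fin.tail (y l) i)).prod (ζ' a l)⟫_𝕜 := by
      rw [List.ofFn_succ, List.prod_cons, mul_apply_eq_comp]
      conv_lhs => rw [← he_sum l, hA.apply_sum_smul, inner_sum]
      simp [ξ', ζ', Fin.tail, adjoint_inner_left, inner_smul_right]
    have hU_adj : ‖adjoint U‖ ≤ 1 := (LinearIsometryEquiv.norm_map _ U).trans_le hU
    calc _ = ‖∑ a, ∑ j, ∑ l, ⟪ξ' a j,
              (List.ofFn fun i => A (Fin.tail (x j) i) (Fin.tail (y l) i)).prod (ζ' a l)⟫_𝕜‖ := by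
            simp_rw [h_peel, Finset.sum_comm (t := Finset.univ (α := Fin N))]
      _ ≤ ∑ a, √(prodSumNormSq 𝕜 (fun j => Fin.tail (x j)) (ξ' a)) *
            √(prodSumNormSq 𝕜 (fun l => Fin.tail (y l)) (ζ' a)) :=
          norm_sum_le_of_le _ fun a _ => ih _ _ (ξ' a) (ζ' a)
      _ ≤ √(∑ a, prodSumNormSq 𝕜 (fun j => Fin.tail (x j)) (ξ' a)) *
            √(∑ a, prodSumNormSq 𝕜 (fun l => Fin.tail (y l)) (ζ' a)) :=
          Real.sum_sqrt_mul_sqrt_le _ (fun _ => prodSumNormSq_nonneg _ _)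
            fun _ => prodSumNormSq_nonneg _ _
      _ ≤ √(prodSumNormSq 𝕜 x ξ) * √(prodSumNormSq 𝕜 y ζ) := by
          gcongr
          · exact sum_prodSumNormSq_tail_le hτ hU_adj hA.adjoint he x ξ
          · exact (sum_prodSumNormSq_tail_smul he_sum ζ).le

theorem norm_le_one_of_norm_inner_le_of_dense {V : F →L[𝕜] F} {D : Set F} (hD : Dense D)
    (hV : ∀ f ∈ D, ∀ g ∈ D, ‖⟪f, V g⟫_𝕜‖ ≤ ‖f‖ * ‖g‖) : ‖V‖ ≤ 1 := by
  have h_all : ∀ f g : F, ‖⟪f, V g⟫_𝕜‖ ≤ ‖f‖ * ‖g‖ :=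
    isClosed_property2 hD.denseRange_val (isClosed_le (by fun_prop) (by fun_prop))
      fun f g => hV f f.2 g g.2
  refine opNorm_le_of_re_inner_le (𝕜 := 𝕜) zero_le_one fun g f hg hf => ?_
  calc RCLike.re ⟪V g, f⟫_𝕜 = RCLike.re ⟪f, V g⟫_𝕜 := inner_re_symm _ _
    _ ≤ ‖⟪f, V g⟫_𝕜‖ := RCLike.re_le_norm _
    _ ≤ ‖f‖ * ‖g‖ := h_all f g
    _ = 1 := by rw [hf, hg, one_mul]

theorem exists_sum_eq_of_mem_span {τ : K →ₗ[𝕜] H →ₗ[𝕜] F} {σ : κ → K} {f : F}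
    (hf : f ∈ Submodule.span 𝕜 (Set.range fun p : κ × H => τ (σ p.1) p.2)) :
    ∃ (N : ℕ) (x : Fin N → κ) (ξ : Fin N → H), ∑ j, τ (σ (x j)) (ξ j) = f := by
  obtain ⟨N, c, g, rfl⟩ := Submodule.mem_span_set'.mp hf
  choose p hp using fun j => (g j).2
  exact ⟨N, fun j => (p j).1, fun j => c j • (p j).2, by simp [← hp]⟩

theorem IsAmpliation.norm_le_one [CompleteSpace H] [CompleteSpace E] {m : ℕ}
    {τ₀ : h →ₗ[𝕜] H →ₗ[𝕜] E} (hτ₀ : IsTensorMap τ₀) {U : E →L[𝕜] E} (hU : ‖U‖ ≤ 1)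
    {A : h → h → H →L[𝕜] H} (hA : IsMatrixElement τ₀ U A)
    {σ : (Fin m → h) → K} (hσ : IsPowerTensorMap 𝕜 σ)
    (hσ_dense : (Submodule.span 𝕜 (Set.range σ)).topologicalClosure = ⊤)
    {τ : K →ₗ[𝕜] H →ₗ[𝕜] F} (hτ : IsTensorMap τ)
    (hτ_dense : (Submodule.span 𝕜 (Set.range fun p : K × H => τ p.1 p.2)).topologicalClosure = ⊤)
    {V : F →L[𝕜] F} (hV : IsAmpliation σ τ A V) : ‖V‖ ≤ 1 := by
  refine norm_le_one_of_norm_inner_le_of_dense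
    (hτ.dense_span_of_dense_span hτ_dense hσ_dense) fun f hf g hg => ?_
  obtain ⟨M, x, ξ, rfl⟩ := exists_sum_eq_of_mem_span hf
  obtain ⟨N, y, ζ, rfl⟩ := exists_sum_eq_of_mem_span hg
  have h_inner : ⟪∑ j, τ (σ (x j)) (ξ j), V (∑ l, τ (σ (y l)) (ζ l))⟫_𝕜 =
      ∑ j, ∑ l, ⟪ξ j, (List.ofFn fun i => A (x j i) (y l i)).prod (ζ l)⟫_𝕜 := by
    simp_rw [map_sum, sum_inner, inner_sum, hV _]
  rw [h_inner]
  refine (norm_sum_inner_prod_le hτ₀ hU hA x y ξ ζ).trans_eq ?_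
  simp_rw [← hτ.norm_sum_prod_sq hσ, Real.sqrt_sq (norm_nonneg _)]

/-! ### Estimates against the vacuum expectation -/

theorem norm_map_sub_self_sq_le {V : F →L[𝕜] F} (hV : ‖V‖ ≤ 1) (f : F) :
    ‖V f - f‖ ^ 2 ≤ 2 * RCLike.re ⟪f, f - V f⟫_𝕜 := by
  have h_sq : ‖V f‖ ^ 2 ≤ ‖f‖ ^ 2 := by
    gcongr
    exact (V.le_of_opNorm_le hV f).trans_eq (one_mul _)
  rw [norm_sub_sq (𝕜 := 𝕜), inner_sub_right, map_sub, inner_self_eq_norm_sq, inner_re_symm]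
  linarith

theorem norm_apply_tmul_sub_le {τ : K →ₗ[𝕜] H →ₗ[𝕜] F} (hτ : IsTensorMap τ) {V : F →L[𝕜] F}
    (hV : ‖V‖ ≤ 1) {A : K → K → H →L[𝕜] H} (hA : IsMatrixElement τ V A) {Ω : H} (hΩ : ‖Ω‖ = 1)
    {T : K →L[𝕜] K} (hT : ∀ φ ψ, ⟪φ, T ψ⟫_𝕜 = ⟪Ω, A φ ψ Ω⟫_𝕜) (v : K) :
    ‖V (τ v Ω) - τ v Ω‖ ≤ √2 * ‖v‖ * √‖T - 1‖ := by
  have h_inner : ⟪τ v Ω, τ v Ω - V (τ v Ω)⟫_𝕜 = ⟪v, (1 - T) v⟫_𝕜 := by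
    simp [inner_sub_right, hT, hA _ _ _ _, hτ.norm_apply, hΩ]
  have h_sq : ‖V (τ v Ω) - τ v Ω‖ ^ 2 ≤ 2 * (‖v‖ ^ 2 * ‖T - 1‖) :=
    calc ‖V (τ v Ω) - τ v Ω‖ ^ 2 ≤ 2 * RCLike.re ⟪v, (1 - T) v⟫_𝕜 :=
          h_inner ▸ norm_map_sub_self_sq_le hV (τ v Ω)
      _ ≤ 2 * (‖v‖ * (‖1 - T‖ * ‖v‖)) := by
          gcongr
          exact (re_inner_le_norm _ _).trans (by gcongr; exact le_opNorm _ _)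
      _ = 2 * (‖v‖ ^ 2 * ‖T - 1‖) := by rw [norm_sub_rev]; ring
  calc ‖V (τ v Ω) - τ v Ω‖ ≤ √(2 * (‖v‖ ^ 2 * ‖T - 1‖)) := Real.le_sqrt_of_sq_le h_sq
    _ = √2 * ‖v‖ * √‖T - 1‖ := by
        rw [Real.sqrt_mul zero_le_two, Real.sqrt_mul (sq_nonneg _), Real.sqrt_sq (norm_nonneg _),
          mul_assoc]

theorem sum_norm_inner_sub_inner_le (s : Finset ι) (a b a' b' : ι → H) :
    ∑ k ∈ s, ‖⟪a k, a' k⟫_𝕜 - ⟪b k, b' k⟫_𝕜‖ ≤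
      √(∑ k ∈ s, ‖a k - b k‖ ^ 2) * √(∑ k ∈ s, ‖a' k‖ ^ 2) +
        √(∑ k ∈ s, ‖b k‖ ^ 2) * √(∑ k ∈ s, ‖a' k - b' k‖ ^ 2) := by
  have h_split (k : ι) : ‖⟪a k, a' k⟫_𝕜 - ⟪b k, b' k⟫_𝕜‖ ≤
      ‖a k - b k‖ * ‖a' k‖ + ‖b k‖ * ‖a' k - b' k‖ :=
    calc ‖⟪a k, a' k⟫_𝕜 - ⟪b k, b' k⟫_𝕜‖ = ‖⟪a k - b k, a' k⟫_𝕜 + ⟪b k, a' k - b' k⟫_𝕜‖ := by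
          rw [inner_sub_left, inner_sub_right, sub_add_sub_cancel]
      _ ≤ _ := norm_add_le_of_le (norm_inner_le_norm _ _) (norm_inner_le_norm _ _)
  refine (Finset.sum_le_sum fun k _ => h_split k).trans ?_
  rw [Finset.sum_add_distrib]
  gcongr <;> exact Real.sum_mul_le_sqrt_mul_sqrt _ _ _

theorem sum_norm_inner_matrixElement_sub_le {Km Kn Fm Fn : Type*}
    [NormedAddCommGroup Km] [InnerProductSpace 𝕜 Km]
    [NormedAddCommGroup Kn] [InnerProductSpace 𝕜 Kn]
    [NormedAddCommGroup Fm] [InnerProductSpace 𝕜 Fm]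
    [NormedAddCommGroup Fn] [InnerProductSpace 𝕜 Fn]
    {τm : Km →ₗ[𝕜] H →ₗ[𝕜] Fm} (hτm : IsTensorMap τm)
    {τn : Kn →ₗ[𝕜] H →ₗ[𝕜] Fn} (hτn : IsTensorMap τn)
    {Vm : Fm →L[𝕜] Fm} (hVm : ‖Vm‖ ≤ 1) {Vn : Fn →L[𝕜] Fn} (hVn : ‖Vn‖ ≤ 1)
    {Am : Km → Km → H →L[𝕜] H} (hAm : IsMatrixElement τm Vm Am)
    {An : Kn → Kn → H →L[𝕜] H} (hAn : IsMatrixElement τn Vn An) {Ω : H} (hΩ : ‖Ω‖ = 1)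
    {Tm : Km →L[𝕜] Km} (hTm : ∀ φ ψ, ⟪φ, Tm ψ⟫_𝕜 = ⟪Ω, Am φ ψ Ω⟫_𝕜)
    {Tn : Kn →L[𝕜] Kn} (hTn : ∀ φ ψ, ⟪φ, Tn ψ⟫_𝕜 = ⟪Ω, An φ ψ Ω⟫_𝕜)
    {φm : ι → Km} (hφm : Orthonormal 𝕜 φm) {φn : ι → Kn} (hφn : Orthonormal 𝕜 φn)
    (v : Km) (w : Kn) (s : Finset ι) :
    ∑ k ∈ s, ‖⟪Am (φm k) v Ω, An (φn k) w Ω⟫_𝕜 - starRingEnd 𝕜 ⟪φm k, v⟫_𝕜 * ⟪φn k, w⟫_𝕜‖ ≤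
      √2 * ‖v‖ * ‖w‖ * (√‖Tm - 1‖ + √‖Tn - 1‖) := by
  have h_coeff (k : ι) : starRingEnd 𝕜 ⟪φm k, v⟫_𝕜 * ⟪φn k, w⟫_𝕜 =
      ⟪(⟪φm k, v⟫_𝕜 • (1 : H →L[𝕜] H)) Ω, (⟪φn k, w⟫_𝕜 • (1 : H →L[𝕜] H)) Ω⟫_𝕜 := by
    simp [inner_smul_left, inner_smul_right, hΩ, mul_comm]
  have h_diff_m := ((hAm.sub hτm.isMatrixElement_one).sqrt_sum_norm_sq_le hτm hφm v Ω s).trans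
    (norm_apply_tmul_sub_le hτm hVm hAm hΩ hTm v)
  have h_diff_n := ((hAn.sub hτn.isMatrixElement_one).sqrt_sum_norm_sq_le hτn hφn w Ω s).trans
    (norm_apply_tmul_sub_le hτn hVn hAn hΩ hTn w)
  have h_one := hτm.isMatrixElement_one.sqrt_sum_norm_sq_le hτm hφm v Ω s
  have h_contr := (hAn.sqrt_sum_norm_sq_le hτn hφn w Ω s).trans (Vn.le_of_opNorm_le hVn _)
  rw [one_apply_eq_self, hτm.norm_apply, hΩ, mul_one] at h_one
  rw [hτn.norm_apply, hΩ, mul_one, one_mul] at h_contr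
  simp_rw [h_coeff]
  refine (sum_norm_inner_sub_inner_le s _ _ _ _).trans ?_
  calc _ ≤ √2 * ‖v‖ * √‖Tm - 1‖ * ‖w‖ + ‖v‖ * (√2 * ‖w‖ * √‖Tn - 1‖) := by
        gcongr
        · exact h_diff_m
        · exact h_diff_n
    _ = √2 * ‖v‖ * ‖w‖ * (√‖Tm - 1‖ + √‖Tn - 1‖) := by ring

theorem norm_le_one_of_adjoint_mul_self_eq_one [CompleteSpace E] {U : E →L[𝕜] E}
    (hU : adjoint U * U = 1) : ‖U‖ ≤ 1 :=
  U.opNorm_le_bound zero_le_one fun x =>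
    ((U.norm_map_iff_adjoint_comp_self.mpr hU x).trans (one_mul _).symm).le

theorem stmt13_general {Km Kn Fm Fn : Type*} [CompleteSpace H] [CompleteSpace E]
    [NormedAddCommGroup Km] [InnerProductSpace 𝕜 Km]
    [NormedAddCommGroup Kn] [InnerProductSpace 𝕜 Kn]
    [NormedAddCommGroup Fm] [InnerProductSpace 𝕜 Fm]
    [NormedAddCommGroup Fn] [InnerProductSpace 𝕜 Fn]
    {τ : h →ₗ[𝕜] H →ₗ[𝕜] E} (hτ : IsTensorMap τ) {U : E →L[𝕜] E} (hU : ‖U‖ ≤ 1)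
    {A : h → h → H →L[𝕜] H} (hA : IsMatrixElement τ U A) {Ω : H} (hΩ : ‖Ω‖ = 1) {m n : ℕ}
    {σm : (Fin m → h) → Km} (hσm : IsPowerTensorMap 𝕜 σm)
    (hσm_dense : (Submodule.span 𝕜 (Set.range σm)).topologicalClosure = ⊤)
    {σn : (Fin n → h) → Kn} (hσn : IsPowerTensorMap 𝕜 σn)
    (hσn_dense : (Submodule.span 𝕜 (Set.range σn)).topologicalClosure = ⊤)
    {τm : Km →ₗ[𝕜] H →ₗ[𝕜] Fm} (hτm : IsTensorMap τm)
    (hτm_dense :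
      (Submodule.span 𝕜 (Set.range fun p : Km × H => τm p.1 p.2)).topologicalClosure = ⊤)
    {τn : Kn →ₗ[𝕜] H →ₗ[𝕜] Fn} (hτn : IsTensorMap τn)
    (hτn_dense :
      (Submodule.span 𝕜 (Set.range fun p : Kn × H => τn p.1 p.2)).topologicalClosure = ⊤)
    {Um : Fm →L[𝕜] Fm} (hUm : IsAmpliation σm τm A Um)
    {Un : Fn →L[𝕜] Fn} (hUn : IsAmpliation σn τn A Un)
    {Am : Km → Km → H →L[𝕜] H} (hAm : IsMatrixElement τm Um Am)
    {An : Kn → Kn → H →L[𝕜] H} (hAn : IsMatrixElement τn Un An)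
    {Tm : Km →L[𝕜] Km} (hTm : ∀ φ ψ, ⟪φ, Tm ψ⟫_𝕜 = ⟪Ω, Am φ ψ Ω⟫_𝕜)
    {Tn : Kn →L[𝕜] Kn} (hTn : ∀ φ ψ, ⟪φ, Tn ψ⟫_𝕜 = ⟪Ω, An φ ψ Ω⟫_𝕜)
    {φm : ι → Km} (hφm : Orthonormal 𝕜 φm) {φn : ι → Kn} (hφn : Orthonormal 𝕜 φn)
    (v : Km) (w : Kn) :
    Summable (fun k =>
      ‖⟪Am (φm k) v Ω, An (φn k) w Ω⟫_𝕜 - starRingEnd 𝕜 ⟪φm k, v⟫_𝕜 * ⟪φn k, w⟫_𝕜‖) ∧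
    ∑' k, ‖⟪Am (φm k) v Ω, An (φn k) w Ω⟫_𝕜 - starRingEnd 𝕜 ⟪φm k, v⟫_𝕜 * ⟪φn k, w⟫_𝕜‖ ≤
      √2 * ‖v‖ * ‖w‖ * (√‖Tm - 1‖ + √‖Tn - 1‖) := by
  have hUm_le : ‖Um‖ ≤ 1 := hUm.norm_le_one hτ hU hA hσm hσm_dense hτm hτm_dense
  have hUn_le : ‖Un‖ ≤ 1 := hUn.norm_le_one hτ hU hA hσn hσn_dense hτn hτn_dense
  have h_finset := sum_norm_inner_matrixElement_sub_le hτm hτn hUm_le hUn_le hAm hAn hΩ hTm hTn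
    hφm hφn v w
  exact ⟨summable_of_sum_le (fun _ => norm_nonneg _) h_finset,
    Real.tsum_le_of_sum_le (fun _ => norm_nonneg _) h_finset⟩

end

theorem stmt13
    {h H E Km Kn Fm Fn : Type*} {ι : Type*}
    [NormedAddCommGroup h] [InnerProductSpace ℂ h] [CompleteSpace h]
    [TopologicalSpace.SeparableSpace h]
    [NormedAddCommGroup H] [InnerProductSpace ℂ H] [CompleteSpace H]
    [TopologicalSpace.SeparableSpace H]
    [NormedAddCommGroup E] [InnerProductSpace ℂ E] [CompleteSpace E]
    [NormedAddCommGroup Km] [InnerProductSpace ℂ Km] [CompleteSpace Km]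
    [NormedAddCommGroup Kn] [InnerProductSpace ℂ Kn] [CompleteSpace Kn]
    [NormedAddCommGroup Fm] [InnerProductSpace ℂ Fm] [CompleteSpace Fm]
    [NormedAddCommGroup Fn] [InnerProductSpace ℂ Fn] [CompleteSpace Fn]
    (tmul : h →ₗ[ℂ] H →ₗ[ℂ] E)
    (htmul : ∀ (u v : h) (ξ ζ : H), ⟪tmul u ξ, tmul v ζ⟫ = ⟪u, v⟫ * ⟪ξ, ζ⟫)
    (hdenseE : (Submodule.span ℂ (Set.range fun p : h × H => tmul p.1 p.2)).topologicalClosure = ⊤)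
    (opAtE : (E →L[ℂ] E) → h → h → (H →L[ℂ] H))
    (hopAtE : ∀ (T : E →L[ℂ] E) (u v : h) (ξ₁ ξ₂ : H),
      ⟪ξ₁, opAtE T u v ξ₂⟫ = ⟪tmul u ξ₁, T (tmul v ξ₂)⟫)
    (Ω : H) (hΩ : ‖Ω‖ = 1)
    (U : ℝ → (E →L[ℂ] E))
    (hUunitary : ∀ t : ℝ, 0 ≤ t → adjoint (U t) * U t = 1 ∧ U t * adjoint (U t) = 1)
    (m n : ℕ) (hm : 1 ≤ m) (hn : 1 ≤ n)
    (tmulm : (Fin m → h) → Km)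
    (htmulm : ∀ u v : Fin m → h, ⟪tmulm u, tmulm v⟫ = ∏ i, ⟪u i, v i⟫)
    (hdenseKm : (Submodule.span ℂ (Set.range tmulm)).topologicalClosure = ⊤)
    (tmuln : (Fin n → h) → Kn)
    (htmuln : ∀ u v : Fin n → h, ⟪tmuln u, tmuln v⟫ = ∏ i, ⟪u i, v i⟫)
    (hdenseKn : (Submodule.span ℂ (Set.range tmuln)).topologicalClosure = ⊤)
    (tmulFm : Km →ₗ[ℂ] H →ₗ[ℂ] Fm)
    (htmulFm : ∀ (x y : Km) (ξ ζ : H), ⟪tmulFm x ξ, tmulFm y ζ⟫ = ⟪x, y⟫ * ⟪ξ, ζ⟫)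
    (hdenseFm :
      (Submodule.span ℂ (Set.range fun p : Km × H => tmulFm p.1 p.2)).topologicalClosure = ⊤)
    (tmulFn : Kn →ₗ[ℂ] H →ₗ[ℂ] Fn)
    (htmulFn : ∀ (x y : Kn) (ξ ζ : H), ⟪tmulFn x ξ, tmulFn y ζ⟫ = ⟪x, y⟫ * ⟪ξ, ζ⟫)
    (hdenseFn :
      (Submodule.span ℂ (Set.range fun p : Kn × H => tmulFn p.1 p.2)).topologicalClosure = ⊤)
    (opAtFm : (Fm →L[ℂ] Fm) → Km → Km → (H →L[ℂ] H))
    (hopAtFm : ∀ (T : Fm →L[ℂ] Fm) (x y : Km) (ξ₁ ξ₂ : H),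
      ⟪ξ₁, opAtFm T x y ξ₂⟫ = ⟪tmulFm x ξ₁, T (tmulFm y ξ₂)⟫)
    (opAtFn : (Fn →L[ℂ] Fn) → Kn → Kn → (H →L[ℂ] H))
    (hopAtFn : ∀ (T : Fn →L[ℂ] Fn) (x y : Kn) (ξ₁ ξ₂ : H),
      ⟪ξ₁, opAtFn T x y ξ₂⟫ = ⟪tmulFn x ξ₁, T (tmulFn y ξ₂)⟫)
    -- the ampliations U_t^{(m)} and U_t^{(n)}
    (Um : ℝ → (Fm →L[ℂ] Fm))
    (hUm : ∀ (t : ℝ) (x y : Fin m → h) (ξ ζ : H),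
      ⟪tmulFm (tmulm x) ξ, Um t (tmulFm (tmulm y) ζ)⟫
        = ⟪ξ, ((List.ofFn fun i => opAtE (U t) (x i) (y i)).prod) ζ⟫)
    (Un : ℝ → (Fn →L[ℂ] Fn))
    (hUn : ∀ (t : ℝ) (x y : Fin n → h) (ξ ζ : H),
      ⟪tmulFn (tmuln x) ξ, Un t (tmulFn (tmuln y) ζ)⟫
        = ⟪ξ, ((List.ofFn fun i => opAtE (U t) (x i) (y i)).prod) ζ⟫)
    -- the expectation semigroups T_t^{(m)} and T_t^{(n)}
    (Tm : ℝ → (Km →L[ℂ] Km))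
    (hTm : ∀ (t : ℝ) (φ ψ : Km), ⟪φ, Tm t ψ⟫ = ⟪Ω, (opAtFm (Um t) φ ψ) Ω⟫)
    (Tn : ℝ → (Kn →L[ℂ] Kn))
    (hTn : ∀ (t : ℝ) (φ ψ : Kn), ⟪φ, Tn t ψ⟫ = ⟪Ω, (opAtFn (Un t) φ ψ) Ω⟫)
    (φm : HilbertBasis ι ℂ Km) (φn : HilbertBasis ι ℂ Kn)
    (v : Fin m → h) (w : Fin n → h)
    (t : ℝ) (ht : 0 ≤ t) :
    Summable (fun k : ι =>
      ‖⟪(opAtFm (Um t) (φm k) (tmulm v)) Ω, (opAtFn (Un t) (φn k) (tmuln w)) Ω⟫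
        - (starRingEnd ℂ) ⟪φm k, tmulm v⟫ * ⟪φn k, tmuln w⟫‖) ∧
    (∑' k : ι,
      ‖⟪(opAtFm (Um t) (φm k) (tmulm v)) Ω, (opAtFn (Un t) (φn k) (tmuln w)) Ω⟫
        - (starRingEnd ℂ) ⟪φm k, tmulm v⟫ * ⟪φn k, tmuln w⟫‖)
      ≤ Real.sqrt 2 * ‖tmulm v‖ * ‖tmuln w‖ *
          (Real.sqrt ‖Tm t - 1‖ + Real.sqrt ‖Tn t - 1‖) :=
  stmt13_general htmul (norm_le_one_of_adjoint_mul_self_eq_one (hUunitary t ht).1) (hopAtE (U t)) hΩ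
    htmulm hdenseKm htmuln hdenseKn htmulFm hdenseFm htmulFn hdenseFn (hUm t) (hUn t)
    (hopAtFm (Um t)) (hopAtFn (Un t)) (hTm t) (hTn t) φm.orthonormal φn.orthonormal
    (tmulm v) (tmuln w)
end

section
/- Under Assumptions A, B and C, for all u, v ∈ h, every n ≥ 1, all product vectors p, w ∈ h^{⊗n} and every ε ∈ {0,1}ⁿ: lim_{t→0} (1/t)·⟨(U_t + U_t* − 2)(u,v)Ω, (U_t^{(ε)} − 1)(p,w)Ω⟩ = 0. (In the Kolmogorov space of the kernel K this says η(u,v,1) = −η(u,v,0).) -/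
/-!
STATEMENT 17: Under Assumptions A, B and C, for all `u, v ∈ h`, every `n ≥ 1`, all
product vectors `p, w ∈ h^{⊗n}` and every `ε ∈ {0,1}ⁿ`:
`lim_{t→0⁺} (1/t)·⟨(U_t + U_t* − 2)(u,v)Ω, (U_t^{(ε)} − 1)(p,w)Ω⟩ = 0`
(in the Kolmogorov space of the kernel `K` this says `η(u,v,1) = −η(u,v,0)`).

Modelling: `E` models `h ⊗ H` (map `tmul`), `opAtE` gives `T(u,v)` on `H`.  For product
vectors, `(U_t^{(ε)}−1)(p,w) = ∏_k U_t^{(ε_k)}(p_k,w_k) − (∏_k ⟨p_k,w_k⟩)·1`, expressed as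
an ordered product `(List.ofFn …).prod` minus a scalar multiple of the identity, and
`(U_t + U_t* − 2)(u,v) = opAtE (U_t + U_t* − 2·1) u v`.
-/

open scoped ComplexInnerProductSpace
open ContinuousLinearMap Filter
open scoped ComplexOrder

open Asymptotics
open scoped InnerProductSpace Topology

/-!
Put `Q_t = (2 - U_t - U_t†)(u, u)`, a positive operator because `U_t` is a contraction. The
Cauchy–Schwarz inequality for the form `⟨·, Q_t ·⟩` gives `‖Q_t Ω‖⁴ ≤ ⟨Ω, Q_t Ω⟩ ⟨Ω, Q_t³ Ω⟩`.

* By independence and stationarity the vacuum compressions of `U_t` to `h` form a semigroup. It is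
  norm continuous by (B), hence differs from `1` by `O(t)`, so that `⟨Ω, Q_t Ω⟩ = O(t)`.
* As `Q_t` is minus the sum of the two operators `(U_t^{(ε)} - 1)(u, u)`, condition (C) says that
  `⟨Ω, Q_t³ Ω⟩ = o(t)`.

Hence `Q_t Ω = o(√t)`, and polarization carries this over to `(2 - U_t - U_t†)(u, v) Ω`. On the
other side, `‖(S - 1) x‖² ≤ Re ⟨x, (2 - S - S†) x⟩` for a contraction `S`, so each factor of
`U_t^{(ε)}` moves the vacuum by `O(√t)` only, and so does their product. The inner product of an
`o(√t)` and an `O(√t)` vector is `o(t)`.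
-/

section Semigroup

lemma map_natCast_mul_eq_pow {M : Type*} [Monoid M] {T : ℝ → M}
    (hT : ∀ s t, 0 < s → 0 < t → T (s + t) = T s * T t) {t : ℝ} (ht : 0 < t) {k : ℕ}
    (hk : k ≠ 0) : T (k * t) = T t ^ k := by
  induction k, Nat.one_le_iff_ne_zero.2 hk using Nat.le_induction with
  | base => simp
  | succ k hk ih =>
    have hkt : 0 < (k : ℝ) * t := by positivity
    rw [pow_succ, ← ih (by lia), ← hT _ _ hkt ht, Nat.cast_succ, add_one_mul]

variable {A : Type*} [NormedRing A] [NormedAlgebra ℝ A]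

lemma natCast_mul_norm_sub_one_le {a : A} {r : ℝ} {n : ℕ} (h : ∀ k ≤ n, ‖a ^ k - 1‖ ≤ r) :
    n * ‖a - 1‖ ≤ r + ‖a - 1‖ * (n * r) := by
  have telescoping :
      n • (a - 1) = (a ^ n - 1) - (a - 1) * ∑ k ∈ Finset.range n, (a ^ k - 1) := by
    rw [Finset.sum_sub_distrib, mul_sub, mul_geom_sum, Finset.sum_const, Finset.card_range,
      mul_smul_comm, mul_one, sub_sub_cancel]
  have sum_le : ‖∑ k ∈ Finset.range n, (a ^ k - 1)‖ ≤ n * r := by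
    simpa using norm_sum_le_of_le (Finset.range n) fun k hk ↦ h k (Finset.mem_range.1 hk).le
  calc n * ‖a - 1‖ = ‖n • (a - 1)‖ := by rw [RCLike.norm_nsmul ℝ, nsmul_eq_mul]
    _ ≤ ‖a ^ n - 1‖ + ‖(a - 1) * ∑ k ∈ Finset.range n, (a ^ k - 1)‖ := by
      rw [telescoping]; exact norm_sub_le _ _
    _ ≤ r + ‖a - 1‖ * (n * r) :=
      add_le_add (h n le_rfl) ((norm_mul_le _ _).trans (by gcongr))

lemma isBigO_sub_one_of_semigroup {T : ℝ → A} {r : ℝ} (hr : r < 1)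
    (hT_add : ∀ s t, 0 < s → 0 < t → T (s + t) = T s * T t)
    (hT : ∀ᶠ t in 𝓝[>] 0, ‖T t - 1‖ ≤ r) :
    (fun t ↦ T t - 1) =O[𝓝[>] 0] fun t ↦ t := by
  obtain ⟨δ, hδ : 0 < δ, hTδ⟩ := mem_nhdsGT_iff_exists_Ioo_subset.1 hT
  refine IsBigO.of_bound (2 * r / (δ * (1 - r))) ?_
  filter_upwards [Ioo_mem_nhdsGT (half_pos hδ)] with t ⟨ht, htδ⟩
  set n := ⌈δ / (2 * t)⌉₊
  have le_n : δ / (2 * t) ≤ n := Nat.le_ceil _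
  have n_mul_lt : n * t < δ := by
    have : n < δ / (2 * t) + 1 := Nat.ceil_lt_add_one (by positivity)
    calc n * t < (δ / (2 * t) + 1) * t := by gcongr
      _ = δ / 2 + t := by field_simp
      _ < δ := by linarith
  have pow_near_one : ∀ k ≤ n, ‖T t ^ k - 1‖ ≤ r := by
    intro k hk
    rcases eq_or_ne k 0 with rfl | hk0
    · simpa using (norm_nonneg _).trans (hTδ ⟨ht, by linarith⟩)
    · rw [← map_natCast_mul_eq_pow hT_add ht hk0]
      exact hTδ ⟨by positivity, lt_of_le_of_lt (by gcongr) n_mul_lt⟩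
  have n_mul_le : n * ‖T t - 1‖ * (1 - r) ≤ r := by
    linarith [natCast_mul_norm_sub_one_le pow_near_one]
  have h1r : 0 < 1 - r := sub_pos.2 hr
  have key : δ / (2 * t) * ‖T t - 1‖ * (1 - r) ≤ r := le_trans (by gcongr) n_mul_le
  rw [Real.norm_of_nonneg ht.le]
  calc ‖T t - 1‖
      = 2 / (δ * (1 - r)) * (δ / (2 * t) * ‖T t - 1‖ * (1 - r)) * t := by field_simp
    _ ≤ 2 / (δ * (1 - r)) * r * t := by gcongr
    _ = 2 * r / (δ * (1 - r)) * t := by ring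

end Semigroup

section ProductExpansion

variable {α 𝕜 F : Type*} [NontriviallyNormedField 𝕜] [NormedAddCommGroup F]
  [NormedSpace 𝕜 F] {l : Filter α}

lemma isBigO_prod_ofFn_apply_sub {n : ℕ} {A : Fin n → α → F →L[𝕜] F} {c : Fin n → 𝕜} {x : F}
    {g : α → ℝ} (hA : ∀ k, A k =O[l] fun _ ↦ (1 : ℝ))
    (hAx : ∀ k, (fun a ↦ A k a x - c k • x) =O[l] g) :
    (fun a ↦ (List.ofFn fun k ↦ A k a).prod x - (∏ k, c k) • x) =O[l] g := by
  induction n with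
  | zero => simpa using isBigO_zero g l
  | succ n ih =>
    have tail := ih (fun k ↦ hA k.succ) fun k ↦ hAx k.succ
    have head_isBigO (f : α → F) : (fun a ↦ A 0 a (f a)) =O[l] f :=
      (IsBigO.of_bound 1 (g := fun a ↦ ‖A 0 a‖ * ‖f a‖)
        (.of_forall fun a ↦ by simpa using (A 0 a).le_opNorm (f a))).trans
          (by simpa using (hA 0).norm_left.mul (isBigO_refl f l).norm_norm)
    have head_tail : (fun a ↦ A 0 a ((List.ofFn fun k : Fin n ↦ A k.succ a).prod x -
        (∏ k : Fin n, c k.succ) • x)) =O[l] g := (head_isBigO _).trans tail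
    refine (head_tail.add ((hAx 0).const_smul_left (∏ k : Fin n, c k.succ))).congr_left fun a ↦ ?_
    simp only [List.ofFn_succ, List.prod_cons, Fin.prod_univ_succ, mul_apply_eq_comp, map_sub,
      map_smul, Pi.smul_apply]
    module

end ProductExpansion

section Positive

variable {𝕜 F : Type*} [RCLike 𝕜] [NormedAddCommGroup F] [InnerProductSpace 𝕜 F]

lemma norm_inner_apply_sq_le_of_isPositive {Q : F →L[𝕜] F} (hQ : Q.IsPositive) (x y : F) :
    ‖⟪x, Q y⟫_𝕜‖ ^ 2 ≤ RCLike.re ⟪x, Q x⟫_𝕜 * RCLike.re ⟪y, Q y⟫_𝕜 := by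
  let core : PreInnerProductSpace.Core 𝕜 F :=
    { inner x y := ⟪x, Q y⟫_𝕜
      conj_inner_symm x y := by rw [inner_conj_symm, hQ.inner_left_eq_inner_right]
      re_inner_nonneg := hQ.re_inner_nonneg_right
      add_left x y z := inner_add_left x y (Q z)
      smul_left x y c := inner_smul_left x (Q y) c }
  have symm : ‖⟪y, Q x⟫_𝕜‖ = ‖⟪x, Q y⟫_𝕜‖ := by
    rw [norm_inner_symm, hQ.inner_left_eq_inner_right]
  rw [sq]
  nth_rw 2 [← symm]
  exact InnerProductSpace.Core.inner_mul_inner_self_le (c := core) x y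

lemma norm_apply_pow_four_le_of_isPositive {Q : F →L[𝕜] F} (hQ : Q.IsPositive) (x : F) :
    ‖Q x‖ ^ 4 ≤ RCLike.re ⟪x, Q x⟫_𝕜 * RCLike.re ⟪x, Q (Q (Q x))⟫_𝕜 := by
  have norm_sq : ‖⟪x, Q (Q x)⟫_𝕜‖ = ‖Q x‖ ^ 2 := by
    simp [← hQ.inner_left_eq_inner_right, inner_self_eq_norm_sq_to_K]
  calc ‖Q x‖ ^ 4 = ‖⟪x, Q (Q x)⟫_𝕜‖ ^ 2 := by rw [norm_sq]; ring
    _ ≤ _ := norm_inner_apply_sq_le_of_isPositive hQ x (Q x)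
    _ = _ := by rw [hQ.inner_left_eq_inner_right]

lemma isLittleO_apply_of_isPositive {α : Type*} {l : Filter α} {Q : α → F →L[𝕜] F} {x : F}
    {g : α → ℝ} (hQ : ∀ᶠ a in l, (Q a).IsPositive)
    (hQ_one : (fun a ↦ ⟪x, Q a x⟫_𝕜) =O[l] fun a ↦ g a ^ 2)
    (hQ_three : (fun a ↦ ⟪x, Q a (Q a (Q a x))⟫_𝕜) =o[l] fun a ↦ g a ^ 2) :
    (fun a ↦ Q a x) =o[l] g := by
  have product_isLittleO : (fun a ↦ ⟪x, Q a x⟫_𝕜 * ⟪x, Q a (Q a (Q a x))⟫_𝕜) =o[l] (g ^ 4) :=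
    (hQ_one.mul_isLittleO hQ_three).congr_right fun a ↦ by simp only [Pi.pow_apply]; ring
  refine .of_norm_left (.of_pow (IsBigO.trans_isLittleO (.of_bound' ?_) product_isLittleO)
    four_ne_zero)
  filter_upwards [hQ] with a ha
  calc ‖‖Q a x‖ ^ 4‖ = ‖Q a x‖ ^ 4 := by simp
    _ ≤ RCLike.re ⟪x, Q a x⟫_𝕜 * RCLike.re ⟪x, Q a (Q a (Q a x))⟫_𝕜 :=
      norm_apply_pow_four_le_of_isPositive ha x
    _ ≤ ‖⟪x, Q a x⟫_𝕜 * ⟪x, Q a (Q a (Q a x))⟫_𝕜‖ := by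
      rw [norm_mul]
      exact (le_abs_self _).trans (by rw [abs_mul]; gcongr <;> exact RCLike.abs_re_le_norm _)

end Positive

section Contraction

variable {𝕜 E : Type*} [RCLike 𝕜] [NormedAddCommGroup E] [InnerProductSpace 𝕜 E]
  [CompleteSpace E]

/-- The defect operator `2 - S - S†`, which measures how far a contraction `S` is from `1`. -/
noncomputable def defect (S : E →L[𝕜] E) : E →L[𝕜] E := (1 - S) + (1 - adjoint S)

lemma defect_adjoint (S : E →L[𝕜] E) : defect (adjoint S) = defect S := by
  rw [defect, defect, adjoint_adjoint, add_comm]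

lemma re_inner_defect (S : E →L[𝕜] E) (x : E) :
    RCLike.re ⟪x, defect S x⟫_𝕜 = 2 * (‖x‖ ^ 2 - RCLike.re ⟪x, S x⟫_𝕜) := by
  simp only [defect, add_apply, sub_apply, one_apply_eq_self, inner_add_right, inner_sub_right,
    map_add, map_sub, adjoint_inner_right, inner_self_eq_norm_sq, inner_re_symm (S x) x]
  ring

lemma norm_inner_defect_le (S : E →L[𝕜] E) (x : E) :
    ‖⟪x, defect S x⟫_𝕜‖ ≤ 2 * ‖⟪x, (S - 1) x⟫_𝕜‖ := by
  have defect_eq : ⟪x, defect S x⟫_𝕜 = -(⟪x, (S - 1) x⟫_𝕜 + ⟪(S - 1) x, x⟫_𝕜) := by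
    simp only [defect, add_apply, sub_apply, one_apply_eq_self, inner_add_right, inner_sub_right,
      inner_sub_left, adjoint_inner_right]
    ring
  rw [defect_eq, norm_neg, two_mul]
  exact (norm_add_le _ _).trans_eq (by rw [norm_inner_symm ((S - 1) x)])

lemma norm_le_one_of_adjoint_mul_self_eq_one_s17 {S : E →L[𝕜] E} (hS : adjoint S * S = 1) :
    ‖S‖ ≤ 1 :=
  opNorm_le_bound _ zero_le_one fun x ↦ by
    rw [(norm_map_iff_adjoint_comp_self S).2 hS, one_mul]

lemma norm_sub_one_apply_sq_le {S : E →L[𝕜] E} (hS : ‖S‖ ≤ 1) (x : E) :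
    ‖(S - 1) x‖ ^ 2 ≤ RCLike.re ⟪x, defect S x⟫_𝕜 := by
  have norm_apply_le : ‖S x‖ ≤ ‖x‖ := by simpa using S.le_of_opNorm_le hS x
  calc ‖(S - 1) x‖ ^ 2
      = ‖S x‖ ^ 2 - 2 * RCLike.re ⟪x, S x⟫_𝕜 + ‖x‖ ^ 2 := by
        rw [sub_apply, one_apply_eq_self, norm_sub_sq (𝕜 := 𝕜), inner_re_symm]
    _ ≤ ‖x‖ ^ 2 - 2 * RCLike.re ⟪x, S x⟫_𝕜 + ‖x‖ ^ 2 := by gcongr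
    _ = RCLike.re ⟪x, defect S x⟫_𝕜 := by rw [re_inner_defect]; ring

lemma isPositive_defect {S : E →L[𝕜] E} (hS : ‖S‖ ≤ 1) : (defect S).IsPositive := by
  refine isPositive_def'.2 ⟨?_, fun x ↦ ?_⟩
  · simp [IsSelfAdjoint, defect, star_eq_adjoint, add_comm]
  · rw [reApplyInnerSelf, inner_re_symm]
    exact (sq_nonneg _).trans (norm_sub_one_apply_sq_le hS x)

end Contraction

section Slice

variable {𝕜 h H E : Type*} [RCLike 𝕜] [NormedAddCommGroup h] [InnerProductSpace 𝕜 h]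
  [NormedAddCommGroup H] [InnerProductSpace 𝕜 H] [NormedAddCommGroup E] [InnerProductSpace 𝕜 E]

lemma norm_eq_mul_norm_of_inner_eq_mul_inner {m : h → H → E}
    (hm : ∀ u v ξ ζ, ⟪m u ξ, m v ζ⟫_𝕜 = ⟪u, v⟫_𝕜 * ⟪ξ, ζ⟫_𝕜) (u : h) (ξ : H) :
    ‖m u ξ‖ = ‖u‖ * ‖ξ‖ := by
  refine (sq_eq_sq₀ (norm_nonneg _) (by positivity)).1 ?_
  have := hm u u ξ ξ
  simp only [inner_self_eq_norm_sq_to_K] at this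
  rw [mul_pow]
  exact_mod_cast this

lemma exists_clm_apply_eq_of_inner_eq_mul_inner {m : h →ₗ[𝕜] H →ₗ[𝕜] E}
    (hm : ∀ u v ξ ζ, ⟪m u ξ, m v ζ⟫_𝕜 = ⟪u, v⟫_𝕜 * ⟪ξ, ζ⟫_𝕜) :
    ∃ τ : h →L[𝕜] H →L[𝕜] E, ∀ u ξ, τ u ξ = m u ξ :=
  ⟨m.mkContinuous₂ 1 fun u ξ ↦ by
    rw [norm_eq_mul_norm_of_inner_eq_mul_inner (m := fun u ξ ↦ m u ξ) hm, one_mul],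
    fun _ _ ↦ rfl⟩

lemma inner_flip_eq_mul_inner {τ : h →L[𝕜] H →L[𝕜] E}
    (hτ : ∀ u v ξ ζ, ⟪τ u ξ, τ v ζ⟫_𝕜 = ⟪u, v⟫_𝕜 * ⟪ξ, ζ⟫_𝕜) (ξ ζ : H) (u v : h) :
    ⟪τ.flip ξ u, τ.flip ζ v⟫_𝕜 = ⟪ξ, ζ⟫_𝕜 * ⟪u, v⟫_𝕜 := by
  rw [flip_apply, flip_apply, hτ, mul_comm]

variable [CompleteSpace H] [CompleteSpace E]

/-- The slice `T(u, v)` on `H` of an operator `T` on the tensor product `E` of `h` and `H`, where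
`τ` is the tensor map. Applied to `τ.flip`, it is the slice of `T` on `h` by two vectors of `H`. -/
noncomputable def slice (τ : h →L[𝕜] H →L[𝕜] E) (u v : h) : (E →L[𝕜] E) →ₗ[𝕜] (H →L[𝕜] H) where
  toFun T := adjoint (τ u) ∘L T ∘L τ v
  map_add' S T := by rw [add_comp, comp_add]
  map_smul' c T := by rw [smul_comp, comp_smul, RingHom.id_apply]

variable {τ : h →L[𝕜] H →L[𝕜] E}

lemma slice_apply (u v : h) (T : E →L[𝕜] E) (ζ : H) :
    slice τ u v T ζ = adjoint (τ u) (T (τ v ζ)) := rfl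

lemma inner_slice_apply (u v : h) (T : E →L[𝕜] E) (ξ ζ : H) :
    ⟪ξ, slice τ u v T ζ⟫_𝕜 = ⟪τ u ξ, T (τ v ζ)⟫_𝕜 := by
  rw [slice_apply, adjoint_inner_right]

lemma norm_slice_le (u v : h) (T : E →L[𝕜] E) : ‖slice τ u v T‖ ≤ ‖τ u‖ * (‖T‖ * ‖τ v‖) := by
  calc ‖slice τ u v T‖ ≤ ‖adjoint (τ u)‖ * ‖T ∘L τ v‖ := opNorm_comp_le _ _
    _ ≤ ‖τ u‖ * (‖T‖ * ‖τ v‖) := by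
      rw [LinearIsometryEquiv.norm_map]; gcongr; exact opNorm_comp_le _ _

lemma isPositive_slice {T : E →L[𝕜] E} (hT : T.IsPositive) (u : h) :
    (slice τ u u T).IsPositive := hT.adjoint_conj (τ u)

lemma slice_one (hτ : ∀ u v ξ ζ, ⟪τ u ξ, τ v ζ⟫_𝕜 = ⟪u, v⟫_𝕜 * ⟪ξ, ζ⟫_𝕜) (u v : h) :
    slice τ u v 1 = ⟪u, v⟫_𝕜 • 1 :=
  ext fun ζ ↦ ext_inner_left 𝕜 fun ξ ↦ by
    simp [inner_slice_apply, hτ, inner_smul_right]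

lemma slice_self_one (hτ : ∀ u v ξ ζ, ⟪τ u ξ, τ v ζ⟫_𝕜 = ⟪u, v⟫_𝕜 * ⟪ξ, ζ⟫_𝕜) {u : h}
    (hu : ‖u‖ = 1) : slice τ u u 1 = 1 := by
  rw [slice_one hτ, inner_self_eq_norm_sq_to_K, hu, RCLike.ofReal_one, one_pow, one_smul]

lemma inner_slice_apply_slice_apply (u v p w : h) (S T : E →L[𝕜] E) (ξ ζ : H) :
    ⟪ξ, slice τ u v S (slice τ p w T ζ)⟫_𝕜 =
      ⟪adjoint (τ v) (adjoint S (τ u ξ)), adjoint (τ p) (T (τ w ζ))⟫_𝕜 := by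
  rw [inner_slice_apply, slice_apply, adjoint_inner_left, adjoint_inner_left]

lemma inner_slice_flip_apply [CompleteSpace h] (u v : h) (T : E →L[𝕜] E) (ξ ζ : H) :
    ⟪u, slice τ.flip ξ ζ T v⟫_𝕜 = ⟪ξ, slice τ u v T ζ⟫_𝕜 := by
  rw [inner_slice_apply, inner_slice_apply, flip_apply, flip_apply]

end Slice

section Parseval

lemma hasSum_inner_adjoint_of_isHilbertSum {ι 𝕜 E : Type*} [RCLike 𝕜] [NormedAddCommGroup E]
    [InnerProductSpace 𝕜 E] [CompleteSpace E] {G : ι → Type*} [∀ i, NormedAddCommGroup (G i)]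
    [∀ i, InnerProductSpace 𝕜 (G i)] [∀ i, CompleteSpace (G i)] {V : ∀ i, G i →ₗᵢ[𝕜] E}
    (hV : IsHilbertSum 𝕜 G V) (x y : E) :
    HasSum (fun i ↦ ⟪adjoint (V i).toContinuousLinearMap x,
      adjoint (V i).toContinuousLinearMap y⟫_𝕜) ⟪x, y⟫_𝕜 := by
  classical
  have adjoint_apply (i : ι) (z : E) :
      adjoint (V i).toContinuousLinearMap z = hV.linearIsometryEquiv z i := by
    refine ext_inner_left 𝕜 fun ξ ↦ ?_
    rw [adjoint_inner_right, ← lp.inner_single_left, ← LinearIsometryEquiv.inner_map_map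
      hV.linearIsometryEquiv.symm, hV.linearIsometryEquiv_symm_apply_single,
      LinearIsometryEquiv.symm_apply_apply]
    rfl
  simp_rw [adjoint_apply, ← hV.linearIsometryEquiv.inner_map_map x y]
  exact lp.hasSum_inner _ _

variable {𝕜 h H E : Type*} [RCLike 𝕜] [NormedAddCommGroup h] [InnerProductSpace 𝕜 h]
  [NormedAddCommGroup H] [InnerProductSpace 𝕜 H] [CompleteSpace H]
  [NormedAddCommGroup E] [InnerProductSpace 𝕜 E] [CompleteSpace E] {τ : h →L[𝕜] H →L[𝕜] E}

/-- Tensoring with a unit vector, as an isometry. -/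
def tensorIsometry (hτ : ∀ u v ξ ζ, ⟪τ u ξ, τ v ζ⟫_𝕜 = ⟪u, v⟫_𝕜 * ⟪ξ, ζ⟫_𝕜) (u : h)
    (hu : ‖u‖ = 1) : H →ₗᵢ[𝕜] E where
  toLinearMap := τ u
  norm_map' ξ := by
    simpa [hu] using norm_eq_mul_norm_of_inner_eq_mul_inner (m := fun u ξ ↦ τ u ξ) hτ u ξ

lemma isHilbertSum_tensorIsometry {ι : Type*}
    (hτ : ∀ u v ξ ζ, ⟪τ u ξ, τ v ζ⟫_𝕜 = ⟪u, v⟫_𝕜 * ⟪ξ, ζ⟫_𝕜)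
    (hτ_dense : (Submodule.span 𝕜 (Set.range fun p : h × H ↦ τ p.1 p.2)).topologicalClosure = ⊤)
    (e : HilbertBasis ι 𝕜 h) :
    IsHilbertSum 𝕜 (fun _ : ι ↦ H) fun i ↦ tensorIsometry hτ (e i) (e.orthonormal.1 i) := by
  refine IsHilbertSum.mk (fun i j hij ξ ζ ↦ ?_) ?_
  · exact (hτ (e i) (e j) ξ ζ).trans (by rw [e.orthonormal.2 hij, zero_mul])
  set K := (⨆ i, LinearMap.range
    (tensorIsometry hτ (e i) (e.orthonormal.1 i)).toLinearMap).topologicalClosure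
  have tensor_basis_mem (i : ι) (ξ : H) : τ (e i) ξ ∈ K :=
    Submodule.le_topologicalClosure _ (Submodule.mem_iSup_of_mem i ⟨ξ, rfl⟩)
  have tensor_mem (u : h) (ξ : H) : τ u ξ ∈ K := by
    have span_le : Submodule.span 𝕜 (Set.range e) ≤ K.comap (τ.flip ξ).toLinearMap :=
      Submodule.span_le.2 (Set.range_subset_iff.2 fun i ↦ tensor_basis_mem i ξ)
    have closed : IsClosed (K.comap (τ.flip ξ).toLinearMap : Set h) :=
      (Submodule.isClosed_topologicalClosure _).preimage (τ.flip ξ).continuous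
    exact Submodule.topologicalClosure_minimal _ span_le closed (e.dense_span ▸ Submodule.mem_top)
  rw [← hτ_dense]
  exact Submodule.topologicalClosure_minimal _
    (Submodule.span_le.2 (Set.range_subset_iff.2 fun p ↦ tensor_mem p.1 p.2))
    (Submodule.isClosed_topologicalClosure _)

lemma slice_flip_mul [CompleteSpace h]
    (hτ : ∀ u v ξ ζ, ⟪τ u ξ, τ v ζ⟫_𝕜 = ⟪u, v⟫_𝕜 * ⟪ξ, ζ⟫_𝕜)
    (hτ_dense : (Submodule.span 𝕜 (Set.range fun p : h × H ↦ τ p.1 p.2)).topologicalClosure = ⊤)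
    {Ω : H} {S T : E →L[𝕜] E}
    (hST : ∀ u v p w, ⟪Ω, slice τ u v S (slice τ p w T Ω)⟫_𝕜 =
      ⟪Ω, slice τ u v S Ω⟫_𝕜 * ⟪Ω, slice τ p w T Ω⟫_𝕜) :
    slice τ.flip Ω Ω (S * T) = slice τ.flip Ω Ω S * slice τ.flip Ω Ω T := by
  refine ext fun w ↦ ext_inner_left 𝕜 fun u ↦ ?_
  obtain ⟨ι, e, -⟩ := exists_hilbertBasis 𝕜 h
  have parseval_E := hasSum_inner_adjoint_of_isHilbertSum
    (isHilbertSum_tensorIsometry hτ hτ_dense e) (adjoint S (τ u Ω)) (T (τ w Ω))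
  have parseval_h := e.hasSum_inner_mul_inner (adjoint (slice τ.flip Ω Ω S) u)
    (slice τ.flip Ω Ω T w)
  have coefficient_eq (i : ι) :
      ⟪adjoint (τ (e i)) (adjoint S (τ u Ω)), adjoint (τ (e i)) (T (τ w Ω))⟫_𝕜 =
        ⟪adjoint (slice τ.flip Ω Ω S) u, e i⟫_𝕜 * ⟪e i, slice τ.flip Ω Ω T w⟫_𝕜 := by
    rw [← inner_slice_apply_slice_apply, hST, adjoint_inner_left, inner_slice_flip_apply,
      inner_slice_flip_apply]
  calc ⟪u, slice τ.flip Ω Ω (S * T) w⟫_𝕜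
      = ⟪adjoint S (τ u Ω), T (τ w Ω)⟫_𝕜 := by
        rw [inner_slice_apply, mul_apply_eq_comp, adjoint_inner_left, flip_apply, flip_apply]
    _ = ⟪adjoint (slice τ.flip Ω Ω S) u, slice τ.flip Ω Ω T w⟫_𝕜 :=
        parseval_E.unique (parseval_h.congr_fun fun i ↦ coefficient_eq i)
    _ = ⟪u, (slice τ.flip Ω Ω S * slice τ.flip Ω Ω T) w⟫_𝕜 := by
        rw [adjoint_inner_left, mul_apply_eq_comp]

end Parseval

section Rates

variable {𝕜 h H E : Type*} [RCLike 𝕜] [NormedAddCommGroup h] [InnerProductSpace 𝕜 h]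
  [NormedAddCommGroup H] [InnerProductSpace 𝕜 H] [CompleteSpace H]
  [NormedAddCommGroup E] [InnerProductSpace 𝕜 E] [CompleteSpace E] {τ : h →L[𝕜] H →L[𝕜] E}

lemma norm_slice_flip_le_of_unit [CompleteSpace h] {T : E →L[𝕜] E} {Ω : H} {r : ℝ} (hr : 0 ≤ r)
    (hT : ∀ u v, ‖u‖ = 1 → ‖v‖ = 1 → ‖⟪Ω, slice τ u v T Ω⟫_𝕜‖ ≤ r) :
    ‖slice τ.flip Ω Ω T‖ ≤ r := by
  refine opNorm_le_of_re_inner_le hr fun v u hv hu ↦ ?_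
  rw [inner_re_symm, inner_slice_flip_apply]
  exact (RCLike.re_le_norm _).trans (hT u v hu hv)

lemma isBigO_slice_flip_sub_one [CompleteSpace h]
    (hτ : ∀ u v ξ ζ, ⟪τ u ξ, τ v ζ⟫_𝕜 = ⟪u, v⟫_𝕜 * ⟪ξ, ζ⟫_𝕜)
    (hτ_dense : (Submodule.span 𝕜 (Set.range fun p : h × H ↦ τ p.1 p.2)).topologicalClosure = ⊤)
    {Ω : H} {U : ℝ → ℝ → E →L[𝕜] E}
    (hU_mul : ∀ s t, 0 ≤ s → s ≤ t → U 0 s * U s t = U 0 t)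
    (hU_indep : ∀ s t, 0 ≤ s → s ≤ t → ∀ u v p w,
      ⟪Ω, slice τ u v (U 0 s) (slice τ p w (U s t) Ω)⟫_𝕜 =
        ⟪Ω, slice τ u v (U 0 s) Ω⟫_𝕜 * ⟪Ω, slice τ p w (U s t) Ω⟫_𝕜)
    (hU_stat : ∀ s t, 0 ≤ s → s ≤ t → ∀ u v,
      ⟪Ω, slice τ u v (U s t) Ω⟫_𝕜 = ⟪Ω, slice τ u v (U 0 (t - s)) Ω⟫_𝕜)
    {r : ℝ} (hr : r < 1) (hU_near : ∀ᶠ t in 𝓝[>] 0, ‖slice τ.flip Ω Ω (U 0 t) - 1‖ ≤ r) :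
    (fun t ↦ slice τ.flip Ω Ω (U 0 t) - 1) =O[𝓝[>] 0] fun t ↦ t := by
  let : NormedAlgebra ℝ (h →L[𝕜] h) := NormedAlgebra.restrictScalars ℝ 𝕜 _
  have compression_stat {s t : ℝ} (hs : 0 ≤ s) (hst : s ≤ t) :
      slice τ.flip Ω Ω (U s t) = slice τ.flip Ω Ω (U 0 (t - s)) :=
    ext fun v ↦ ext_inner_left 𝕜 fun u ↦ by
      rw [inner_slice_flip_apply, inner_slice_flip_apply, hU_stat s t hs hst]
  refine isBigO_sub_one_of_semigroup hr (fun s t hs ht ↦ ?_) hU_near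
  have hst : s ≤ s + t := by linarith
  rw [← hU_mul s (s + t) hs.le hst, slice_flip_mul hτ hτ_dense (hU_indep s (s + t) hs.le hst),
    compression_stat hs.le hst, add_sub_cancel_left]

variable {α : Type*} {l : Filter α}

lemma isBigO_inner_defect (hτ : ∀ u v ξ ζ, ⟪τ u ξ, τ v ζ⟫_𝕜 = ⟪u, v⟫_𝕜 * ⟪ξ, ζ⟫_𝕜)
    {V : α → E →L[𝕜] E} {u : h} (hu : ‖u‖ = 1) {g : α → ℝ}
    (hV : (fun a ↦ slice τ u u (V a) - 1) =O[l] g) (ξ : H) :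
    (fun a ↦ ⟪τ u ξ, defect (V a) (τ u ξ)⟫_𝕜) =O[l] g := by
  refine (IsBigO.of_bound (2 * (‖ξ‖ * ‖ξ‖)) (.of_forall fun a ↦ ?_)).trans hV
  have inner_eq : ⟪τ u ξ, (V a - 1) (τ u ξ)⟫_𝕜 = ⟪ξ, (slice τ u u (V a) - 1) ξ⟫_𝕜 := by
    rw [← slice_self_one hτ hu, ← map_sub, inner_slice_apply]
  calc ‖⟪τ u ξ, defect (V a) (τ u ξ)⟫_𝕜‖
      ≤ 2 * ‖⟪ξ, (slice τ u u (V a) - 1) ξ⟫_𝕜‖ :=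
        (norm_inner_defect_le _ _).trans_eq (by rw [inner_eq])
    _ ≤ 2 * (‖ξ‖ * (‖slice τ u u (V a) - 1‖ * ‖ξ‖)) := by
        gcongr
        exact (norm_inner_le_norm _ _).trans (by gcongr; exact le_opNorm _ _)
    _ = 2 * (‖ξ‖ * ‖ξ‖) * ‖slice τ u u (V a) - 1‖ := by ring

lemma isBigO_sub_one_apply_of_defect {V : α → E →L[𝕜] E} (hV : ∀ᶠ a in l, ‖V a‖ ≤ 1) {x : E}
    {g : α → ℝ} (hx : (fun a ↦ ⟪x, defect (V a) x⟫_𝕜) =O[l] fun a ↦ g a ^ 2) :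
    (fun a ↦ (V a - 1) x) =O[l] g := by
  refine .of_norm_left (.of_pow (n := 2) two_ne_zero (IsBigO.trans (.of_bound' ?_) hx))
  filter_upwards [hV] with a ha
  rw [Pi.pow_apply, norm_pow, norm_norm]
  exact (norm_sub_one_apply_sq_le ha x).trans (RCLike.re_le_norm _)

lemma isBigO_prod_slice_apply_sub (hτ : ∀ u v ξ ζ, ⟪τ u ξ, τ v ζ⟫_𝕜 = ⟪u, v⟫_𝕜 * ⟪ξ, ζ⟫_𝕜)
    {n : ℕ} {V : Fin n → α → E →L[𝕜] E} (hV : ∀ k, ∀ᶠ a in l, ‖V k a‖ ≤ 1) {p w : Fin n → h}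
    {Ω : H} {g : α → ℝ} (hVΩ : ∀ k, (fun a ↦ (V k a - 1) (τ (w k) Ω)) =O[l] g) :
    (fun a ↦ ((List.ofFn fun k ↦ slice τ (p k) (w k) (V k a)).prod -
      (∏ k, ⟪p k, w k⟫_𝕜) • 1) Ω) =O[l] g := by
  refine isBigO_prod_ofFn_apply_sub (fun k ↦ ?_) fun k ↦ ?_
  · refine .of_bound (‖τ (p k)‖ * (1 * ‖τ (w k)‖)) ?_
    filter_upwards [hV k] with a ha
    rw [norm_one, mul_one]
    exact (norm_slice_le _ _ _).trans (by gcongr)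
  · refine ((adjoint (τ (p k))).isBigO_comp _ _ |>.trans (hVΩ k)).congr_left fun a ↦ ?_
    rw [← slice_apply, map_sub, slice_one hτ]
    rfl

lemma isLittleO_inner_sum_pow_three {F ι : Type*} [NormedAddCommGroup F] [InnerProductSpace 𝕜 F]
    [Fintype ι] {S : ι → α → F →L[𝕜] F} {x : F} {g : α → ℝ}
    (hS : ∀ i j k, (fun a ↦ ⟪x, S i a (S j a (S k a x))⟫_𝕜) =o[l] g) :
    (fun a ↦ ⟪x, (∑ i, S i a) ((∑ i, S i a) ((∑ i, S i a) x))⟫_𝕜) =o[l] g := by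
  simp only [sum_apply, map_sum, inner_sum]
  exact .fun_sum fun k _ ↦ .fun_sum fun j _ ↦ .fun_sum fun i _ ↦ hS i j k

lemma slice_defect_eq_sum (u : h) (T : E →L[𝕜] E) :
    slice τ u u (defect T) =
      ∑ ε : Bool, -slice τ u u ((if ε then adjoint T else T) - 1) := by
  simp only [defect, Fintype.sum_bool, ← map_neg, ← map_add]
  simp [add_comm]

lemma isLittleO_slice_defect_apply {V : α → E →L[𝕜] E} (hV : ∀ᶠ a in l, ‖V a‖ ≤ 1) {u : h}
    {Ω : H} {g : α → ℝ}
    (hone : (fun a ↦ ⟪τ u Ω, defect (V a) (τ u Ω)⟫_𝕜) =O[l] fun a ↦ g a ^ 2)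
    (hthree : ∀ ε₁ ε₂ ε₃ : Bool, (fun a ↦ ⟪Ω,
      (slice τ u u ((if ε₁ then adjoint (V a) else V a) - 1) *
        slice τ u u ((if ε₂ then adjoint (V a) else V a) - 1) *
        slice τ u u ((if ε₃ then adjoint (V a) else V a) - 1)) Ω⟫_𝕜) =o[l] fun a ↦ g a ^ 2) :
    (fun a ↦ slice τ u u (defect (V a)) Ω) =o[l] g := by
  refine isLittleO_apply_of_isPositive
    (hV.mono fun a ha ↦ isPositive_slice (isPositive_defect ha) u)
    (hone.congr_left fun a ↦ (inner_slice_apply ..).symm) ?_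
  simp only [slice_defect_eq_sum]
  refine isLittleO_inner_sum_pow_three fun ε₁ ε₂ ε₃ ↦
    (hthree ε₁ ε₂ ε₃).neg_left.congr_left fun a ↦ ?_
  simp only [mul_apply_eq_comp, neg_apply, map_neg, inner_neg_right, neg_neg]

end Rates

section Polarization

variable {h H E : Type*} [NormedAddCommGroup h] [InnerProductSpace ℂ h]
  [NormedAddCommGroup H] [InnerProductSpace ℂ H] [CompleteSpace H]
  [NormedAddCommGroup E] [InnerProductSpace ℂ E] [CompleteSpace E] {τ : h →L[ℂ] H →L[ℂ] E}

lemma four_smul_slice (u v : h) (T : E →L[ℂ] E) :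
    (4 : ℂ) • slice τ u v T =
      slice τ (u + v) (u + v) T - slice τ (u - v) (u - v) T
        - Complex.I • slice τ (u + Complex.I • v) (u + Complex.I • v) T
        + Complex.I • slice τ (u - Complex.I • v) (u - Complex.I • v) T := by
  refine ext fun ζ ↦ ext_inner_left ℂ fun ξ ↦ ?_
  simp only [add_apply, sub_apply, smul_apply, inner_smul_right, inner_smul_left, inner_add_right,
    inner_add_left, inner_sub_right, inner_sub_left, inner_slice_apply, map_add, map_sub, map_smul,
    Complex.conj_I]
  linear_combination (2 * ⟪τ u ξ, T (τ v ζ)⟫_ℂ - 2 * ⟪τ v ξ, T (τ u ζ)⟫_ℂ) * Complex.I_sq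

lemma isLittleO_slice_apply_of_diagonal {α : Type*} {l : Filter α} {T : α → E →L[ℂ] E} {ζ : H}
    {g : α → ℝ} (hT : ∀ u, (fun a ↦ slice τ u u (T a) ζ) =o[l] g) (u v : h) :
    (fun a ↦ slice τ u v (T a) ζ) =o[l] g := by
  have hsum := (((hT (u + v)).sub (hT (u - v))).sub ((hT (u + Complex.I • v)).const_smul_left
    Complex.I)).add ((hT (u - Complex.I • v)).const_smul_left Complex.I)
  refine (isLittleO_const_smul_left (four_ne_zero (α := ℂ))).1 (hsum.congr_left fun a ↦ ?_)
  exact (DFunLike.congr_fun (four_smul_slice u v (T a)) ζ).symm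

end Polarization

lemma tendsto_one_div_mul_nhdsGT_iff_isLittleO {f : ℝ → ℂ} :
    Tendsto (fun t : ℝ ↦ 1 / (t : ℂ) * f t) (𝓝[>] 0) (𝓝 0) ↔ f =o[𝓝[>] 0] fun t : ℝ ↦ t := by
  have ne_zero : ∀ᶠ t : ℝ in 𝓝[>] 0, (t : ℂ) = 0 → f t = 0 := by
    filter_upwards [self_mem_nhdsWithin] with t (ht : 0 < t) h0
    exact absurd (Complex.ofReal_eq_zero.1 h0) ht.ne'
  rw [← Complex.isLittleO_ofReal_right]
  simp_rw [one_div_mul_eq_div, isLittleO_iff_tendsto' ne_zero]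

lemma isLittleO_inner_slice_defect_prod {h H E α : Type*}
    [NormedAddCommGroup h] [InnerProductSpace ℂ h] [CompleteSpace h]
    [NormedAddCommGroup H] [InnerProductSpace ℂ H] [CompleteSpace H]
    [NormedAddCommGroup E] [InnerProductSpace ℂ E] [CompleteSpace E]
    {τ : h →L[ℂ] H →L[ℂ] E} (hτ : ∀ u v ξ ζ, ⟪τ u ξ, τ v ζ⟫ = ⟪u, v⟫ * ⟪ξ, ζ⟫)
    {Ω : H} (hΩ : ‖Ω‖ = 1) {l : Filter α} {V : α → E →L[ℂ] E} (hV : ∀ᶠ a in l, ‖V a‖ ≤ 1)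
    {g : α → ℝ} (hcompression : (fun a ↦ slice τ.flip Ω Ω (V a) - 1) =O[l] fun a ↦ g a ^ 2)
    (hGauss : ∀ (u : h) (ε₁ ε₂ ε₃ : Bool), (fun a ↦ ⟪Ω,
      (slice τ u u ((if ε₁ then adjoint (V a) else V a) - 1) *
        slice τ u u ((if ε₂ then adjoint (V a) else V a) - 1) *
        slice τ u u ((if ε₃ then adjoint (V a) else V a) - 1)) Ω⟫) =o[l] fun a ↦ g a ^ 2)
    (u v : h) {n : ℕ} (p w : Fin n → h) (ε : Fin n → Bool) :
    (fun a ↦ ⟪slice τ u v (defect (V a)) Ω,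
      ((List.ofFn fun k ↦ slice τ (p k) (w k) (if ε k then adjoint (V a) else V a)).prod -
        (∏ k, ⟪p k, w k⟫) • 1) Ω⟫) =o[l] fun a ↦ g a ^ 2 := by
  have vacuum_defect (z : h) :
      (fun a ↦ ⟪τ z Ω, defect (V a) (τ z Ω)⟫) =O[l] fun a ↦ g a ^ 2 :=
    isBigO_inner_defect (inner_flip_eq_mul_inner hτ) hΩ hcompression z
  have left_isLittleO : (fun a ↦ slice τ u v (defect (V a)) Ω) =o[l] g :=
    isLittleO_slice_apply_of_diagonal
      (fun z ↦ isLittleO_slice_defect_apply hV (vacuum_defect z) (hGauss z)) u v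
  have signed_contraction (k : Fin n) : ∀ᶠ a in l, ‖if ε k then adjoint (V a) else V a‖ ≤ 1 := by
    cases ε k <;> simpa using hV
  have right_isBigO := isBigO_prod_slice_apply_sub hτ signed_contraction (p := p) (w := w)
    (Ω := Ω) (g := g) fun k ↦ isBigO_sub_one_apply_of_defect (signed_contraction k) <| by
      cases ε k <;> simpa [defect_adjoint] using vacuum_defect (w k)
  have product_isLittleO := left_isLittleO.norm_left.mul_isBigO right_isBigO.norm_left
  refine IsBigO.trans_isLittleO (.of_bound' (.of_forall fun a ↦ ?_))
    (product_isLittleO.congr_right fun a ↦ (sq (g a)).symm)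
  rw [norm_mul, norm_norm, norm_norm]
  exact norm_inner_le_norm _ _

theorem stmt17_general
    {h H E : Type*}
    [NormedAddCommGroup h] [InnerProductSpace ℂ h] [CompleteSpace h]
    [NormedAddCommGroup H] [InnerProductSpace ℂ H] [CompleteSpace H]
    [NormedAddCommGroup E] [InnerProductSpace ℂ E] [CompleteSpace E]
    (tmul : h →ₗ[ℂ] H →ₗ[ℂ] E)
    (htmul : ∀ (u v : h) (ξ ζ : H), ⟪tmul u ξ, tmul v ζ⟫ = ⟪u, v⟫ * ⟪ξ, ζ⟫)
    (hdenseE : (Submodule.span ℂ (Set.range fun p : h × H => tmul p.1 p.2)).topologicalClosure = ⊤)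
    (opAtE : (E →L[ℂ] E) → h → h → (H →L[ℂ] H))
    (hopAtE : ∀ (T : E →L[ℂ] E) (u v : h) (ξ₁ ξ₂ : H),
      ⟪ξ₁, opAtE T u v ξ₂⟫ = ⟪tmul u ξ₁, T (tmul v ξ₂)⟫)
    (Ω : H) (hΩ : ‖Ω‖ = 1)
    (U : ℝ → ℝ → (E →L[ℂ] E))
    (hU : ∀ t : ℝ, 0 ≤ t → ‖U 0 t‖ ≤ 1)
    (hA1 : ∀ s t : ℝ, 0 ≤ s → s ≤ t → U 0 s * U s t = U 0 t)
    (hA2 : ∀ s t : ℝ, 0 ≤ s → s ≤ t → ∀ u v p w : h,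
      ⟪Ω, opAtE (U 0 s) u v (opAtE (U s t) p w Ω)⟫ =
        ⟪Ω, opAtE (U 0 s) u v Ω⟫ * ⟪Ω, opAtE (U s t) p w Ω⟫)
    (hA3 : ∀ s t : ℝ, 0 ≤ s → s ≤ t → ∀ u v : h,
      ⟪Ω, opAtE (U s t) u v Ω⟫ = ⟪Ω, opAtE (U 0 (t - s)) u v Ω⟫)
    (hB : ∀ δ : ℝ, 0 < δ → ∃ τ : ℝ, 0 < τ ∧ ∀ t : ℝ, 0 < t → t < τ →
      ∀ u v : h, ‖u‖ = 1 → ‖v‖ = 1 → ‖⟪Ω, (opAtE (U 0 t - 1) u v) Ω⟫‖ < δ)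
    (hC : ∀ (u : h) (ε₁ ε₂ ε₃ : Bool),
      Tendsto (fun t : ℝ => (1 / t) *
          ⟪Ω, ((opAtE ((if ε₁ then adjoint (U 0 t) else U 0 t) - 1) u u) *
               (opAtE ((if ε₂ then adjoint (U 0 t) else U 0 t) - 1) u u) *
               (opAtE ((if ε₃ then adjoint (U 0 t) else U 0 t) - 1) u u)) Ω⟫)
        (𝓝[>] 0) (𝓝 0))
    (u v : h) (n : ℕ) (p w : Fin n → h) (ε : Fin n → Bool) :
    Tendsto (fun t : ℝ => (1 / t) *
        ⟪(opAtE (U 0 t + adjoint (U 0 t) - (2 : ℂ) • (1 : E →L[ℂ] E)) u v) Ω,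
          ((List.ofFn fun k =>
              opAtE (if ε k then adjoint (U 0 t) else U 0 t) (p k) (w k)).prod
            - (∏ k, ⟪p k, w k⟫) • (1 : H →L[ℂ] H)) Ω⟫)
      (𝓝[>] 0) (𝓝 0) := by
  obtain ⟨τ, hτ⟩ := exists_clm_apply_eq_of_inner_eq_mul_inner htmul
  simp only [← hτ] at htmul hdenseE hopAtE
  obtain rfl : opAtE = fun T u v ↦ slice τ u v T :=
    funext fun T ↦ funext fun u ↦ funext fun v ↦ ext fun ζ ↦ ext_inner_left ℂ fun ξ ↦
      (hopAtE T u v ξ ζ).trans (inner_slice_apply u v T ξ ζ).symm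
  have sqrt_sq : (fun t : ℝ ↦ t) =ᶠ[𝓝[>] 0] fun t ↦ √t ^ 2 := by
    filter_upwards [self_mem_nhdsWithin] with t (ht : 0 < t) using (Real.sq_sqrt ht.le).symm
  have contraction : ∀ᶠ t in 𝓝[>] 0, ‖U 0 t‖ ≤ 1 := by
    filter_upwards [self_mem_nhdsWithin] with t (ht : 0 < t) using hU t ht.le
  have compression_near :
      ∀ᶠ t in 𝓝[>] 0, ‖slice τ.flip Ω Ω (U 0 t) - 1‖ ≤ 1 / 2 := by
    obtain ⟨δ, hδ, hBδ⟩ := hB (1 / 2) one_half_pos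
    filter_upwards [Ioo_mem_nhdsGT hδ] with t ht
    rw [← slice_self_one (inner_flip_eq_mul_inner htmul) hΩ, ← map_sub]
    exact norm_slice_flip_le_of_unit one_half_pos.le fun u v hu hv ↦
      (hBδ t ht.1 ht.2 u v hu hv).le
  have compression_isBigO := isBigO_slice_flip_sub_one htmul hdenseE hA1 hA2 hA3
    one_half_lt_one compression_near
  have limit := isLittleO_inner_slice_defect_prod htmul hΩ contraction
    (compression_isBigO.trans_eventuallyEq sqrt_sq)
    (fun z ε₁ ε₂ ε₃ ↦ (tendsto_one_div_mul_nhdsGT_iff_isLittleO.1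
      (hC z ε₁ ε₂ ε₃)).trans_eventuallyEq sqrt_sq) u v p w ε
  have neg_defect (t : ℝ) : U 0 t + adjoint (U 0 t) - (2 : ℂ) • 1 = -defect (U 0 t) := by
    rw [defect, two_smul]
    abel
  refine tendsto_one_div_mul_nhdsGT_iff_isLittleO.2
    ((limit.trans_eventuallyEq sqrt_sq.symm).neg_left.congr_left fun t ↦ ?_)
  simp only [neg_defect, map_neg, neg_apply, inner_neg_left]

theorem stmt17
    {h H E : Type*}
    [NormedAddCommGroup h] [InnerProductSpace ℂ h] [CompleteSpace h]
    [TopologicalSpace.SeparableSpace h]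
    [NormedAddCommGroup H] [InnerProductSpace ℂ H] [CompleteSpace H]
    [TopologicalSpace.SeparableSpace H]
    [NormedAddCommGroup E] [InnerProductSpace ℂ E] [CompleteSpace E]
    (tmul : h →ₗ[ℂ] H →ₗ[ℂ] E)
    (htmul : ∀ (u v : h) (ξ ζ : H), ⟪tmul u ξ, tmul v ζ⟫ = ⟪u, v⟫ * ⟪ξ, ζ⟫)
    (hdenseE : (Submodule.span ℂ (Set.range fun p : h × H => tmul p.1 p.2)).topologicalClosure = ⊤)
    (opAtE : (E →L[ℂ] E) → h → h → (H →L[ℂ] H))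
    (hopAtE : ∀ (T : E →L[ℂ] E) (u v : h) (ξ₁ ξ₂ : H),
      ⟪ξ₁, opAtE T u v ξ₂⟫ = ⟪tmul u ξ₁, T (tmul v ξ₂)⟫)
    (Ω : H) (hΩ : ‖Ω‖ = 1)
    (U : ℝ → ℝ → (E →L[ℂ] E))
    (hUunitary : ∀ s t : ℝ, 0 ≤ s → s ≤ t →
      adjoint (U s t) * U s t = 1 ∧ U s t * adjoint (U s t) = 1)
    -- (A1) evolution
    (hA1 : ∀ r s t : ℝ, 0 ≤ r → r ≤ s → s ≤ t → U r s * U s t = U r t)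
    -- (A2a) commutation of increments over disjoint intervals
    (hA2a : ∀ s₁ t₁ s₂ t₂ : ℝ, 0 ≤ s₁ → s₁ ≤ t₁ → 0 ≤ s₂ → s₂ ≤ t₂ →
      Disjoint (Set.Ico s₁ t₁) (Set.Ico s₂ t₂) →
      ∀ u₁ v₁ u₂ v₂ : h,
        Commute (opAtE (U s₁ t₁) u₁ v₁) (opAtE (U s₂ t₂) u₂ v₂) ∧
        Commute (opAtE (U s₁ t₁) u₁ v₁) (opAtE (adjoint (U s₂ t₂)) u₂ v₂))
    -- (A2b) factorisation of vacuum expectations over disjoint intervals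
    (hA2b : ∀ s₁ t₁ s₂ t₂ : ℝ, 0 ≤ s₁ → s₁ ≤ t₁ → 0 ≤ s₂ → s₂ ≤ t₂ →
      Disjoint (Set.Ico s₁ t₁) (Set.Ico s₂ t₂) →
      ∀ (N M : ℕ) (a b : Fin N → ℝ) (q r : Fin M → ℝ)
        (ε : Fin N → Bool) (ε' : Fin M → Bool)
        (u v : Fin N → h) (p w : Fin M → h),
        (∀ i, s₁ ≤ a i ∧ a i ≤ b i ∧ b i ≤ t₁) →
        (∀ i j : Fin N, i < j → b i ≤ a j) →
        (∀ i, s₂ ≤ q i ∧ q i ≤ r i ∧ r i ≤ t₂) →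
        (∀ i j : Fin M, i < j → r i ≤ q j) →
        ⟪Ω, (((List.ofFn fun i => opAtE
                (if ε i then adjoint (U (a i) (b i)) else U (a i) (b i)) (u i) (v i)).prod) *
             ((List.ofFn fun i => opAtE
                (if ε' i then adjoint (U (q i) (r i)) else U (q i) (r i)) (p i) (w i)).prod)) Ω⟫
          = ⟪Ω, ((List.ofFn fun i => opAtE
                  (if ε i then adjoint (U (a i) (b i)) else U (a i) (b i)) (u i) (v i)).prod) Ω⟫
            * ⟪Ω, ((List.ofFn fun i => opAtE
                  (if ε' i then adjoint (U (q i) (r i)) else U (q i) (r i)) (p i) (w i)).prod) Ω⟫)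
    -- (A3) stationarity
    (hA3 : ∀ (s t : ℝ), 0 ≤ s → s ≤ t → ∀ (N : ℕ) (ε : Fin N → Bool) (u v : Fin N → h),
      ⟪Ω, ((List.ofFn fun i => opAtE
              (if ε i then adjoint (U s t) else U s t) (u i) (v i)).prod) Ω⟫
        = ⟪Ω, ((List.ofFn fun i => opAtE
              (if ε i then adjoint (U 0 (t - s)) else U 0 (t - s)) (u i) (v i)).prod) Ω⟫)
    -- (B) uniform continuity
    (hB : ∀ δ : ℝ, 0 < δ → ∃ τ : ℝ, 0 < τ ∧ ∀ t : ℝ, 0 < t → t < τ →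
      ∀ u v : h, ‖u‖ = 1 → ‖v‖ = 1 →
        ‖⟪Ω, (opAtE (U 0 t - 1) u v) Ω⟫‖ < δ)
    -- (C) Gaussian condition
    (hC : ∀ (u₁ v₁ u₂ v₂ u₃ v₃ : h) (ε₁ ε₂ ε₃ : Bool),
      Tendsto (fun t : ℝ => (1 / t) *
          ⟪Ω, ((opAtE ((if ε₁ then adjoint (U 0 t) else U 0 t) - 1) u₁ v₁) *
               (opAtE ((if ε₂ then adjoint (U 0 t) else U 0 t) - 1) u₂ v₂) *
               (opAtE ((if ε₃ then adjoint (U 0 t) else U 0 t) - 1) u₃ v₃)) Ω⟫)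
        (nhdsWithin 0 (Set.Ioi 0)) (nhds 0))
    (u v : h) (n : ℕ) (hn : 1 ≤ n)
    (p w : Fin n → h) (ε : Fin n → Bool) :
    Filter.Tendsto (fun t : ℝ => (1 / t) *
        ⟪(opAtE (U 0 t + adjoint (U 0 t) - (2 : ℂ) • (1 : E →L[ℂ] E)) u v) Ω,
          (((List.ofFn fun k =>
              opAtE (if ε k then adjoint (U 0 t) else U 0 t) (p k) (w k)).prod
            - (∏ k, ⟪p k, w k⟫) • (1 : H →L[ℂ] H))) Ω⟫)
      (nhdsWithin 0 (Set.Ioi 0)) (nhds 0) :=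
  stmt17_general tmul htmul hdenseE opAtE hopAtE Ω hΩ U
    (fun t ht ↦ norm_le_one_of_adjoint_mul_self_eq_one_s17 (hUunitary 0 t le_rfl ht).1)
    (hA1 0 · · le_rfl)
    (fun s t hs hst u₁ v₁ u₂ v₂ ↦ by
      simpa using hA2b 0 s s t le_rfl hs hs hst Set.Ico_disjoint_Ico_same 1 1 ![0] ![s] ![s] ![t]
        ![false] ![false] ![u₁] ![v₁] ![u₂] ![v₂] (by simp [hs]) (by simp) (by simp [hst])
        (by simp))
    (fun s t hs hst u₁ v₁ ↦ by simpa using hA3 s t hs hst 1 ![false] ![u₁] ![v₁])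
    hB (fun u ↦ hC u u u u u u) u v n p w ε
end
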